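/- arXiv:1408.2559 — 2 statements merged into one kernel-verified Lean document; each statement's English description precedes it below -/
import Mathlib

section
/- For every fixed integer t ≥ 1: (i) the proportion of t-intersecting families 𝓕 ⊆ S_n that are trivial tends to 1 as n → ∞; and (ii) the total number of t-intersecting families in S_n, divided by binom(n,t)²·t!·2^{(n−t)!}, tends to 1 as n → ∞. -/
/-- The number of indices on which two permutations of `Fin n` agree. -/
def agreements {n : ℕ} (σ π : Equiv.Perm (Fin n)) : ℕ :=
  (Finset.univ.filter (fun i => σ i = π i)).card

/-- A family of permutations is `t`-intersecting if any two of its members agree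
on at least `t` indices. -/
def IsTIntersecting {n : ℕ} (t : ℕ) (F : Finset (Equiv.Perm (Fin n))) : Prop :=
  ∀ σ ∈ F, ∀ π ∈ F, t ≤ agreements σ π

/-- A family of permutations is trivial if there is a `t`-set of indices `I` and
prescribed values `x i` such that every member sends each `i ∈ I` to `x i`. -/
def IsTrivial {n : ℕ} (t : ℕ) (F : Finset (Equiv.Perm (Fin n))) : Prop :=
  ∃ I : Finset (Fin n), I.card = t ∧ ∃ x : Fin n → Fin n,
    ∀ σ ∈ F, ∀ i ∈ I, σ i = x i

/-!
Every `t`-intersecting family extends to a maximal one, and by the set-pairs inequality a maximal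
family is determined by at most `4 ^ n` of its members. Hence there are at most
`(n! + 1) ^ (4 ^ n)` maximal families, which is negligible against `2 ^ (ε (n - t)!)`, and it
suffices to bound the size of a nontrivial `t`-intersecting family `F` away from `(n - t)!`.

To do so, view permutations as their graphs in `[n] × [n]`. A kernel is a set of at most
`q ≈ n ^ (1 / (t + 2))` pairs outside which some subfamily of `F` is spread, and all but few members
of `F` contain a kernel. Bonferroni's inequality yields two members of any two such subfamilies that
meet only inside the intersection of their kernels, so any two kernels share `t` pairs. If all
kernels contain a common `t`-set `T`, then almost all of `F` extends `T`; but a member of `F` that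
does not extend `T` excludes a third of the extensions of `T`, by counting derangements. Otherwise
the kernels are covered by `q ^ (t + 1)` sets of `t + 1` pairs, and `F` has size `o((n - t)!)`.

The trivial families are the subfamilies of `binom(n, t)² t!` stars of size `(n - t)!`, whose
pairwise intersections have size at most `(n - t - 1)!`, so that overcounting is negligible.
-/

namespace IntersectingPermutations

open Finset
open scoped Nat

section SetPairs

-- In the cube of subsets of `E`, the union of all `A i` and `B i`, the intervals `[B i, E \ A i]`
-- are pairwise disjoint and each fills at least a `2⁻⁽ᵃ⁺ᵇ⁾` fraction.
theorem card_le_two_pow_of_setPairs {ι β : Type*} {s : Finset ι} {A B : ι → Finset β} {a b : ℕ}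
    (hA : ∀ i ∈ s, #(A i) ≤ a) (hB : ∀ i ∈ s, #(B i) ≤ b)
    (hdisj : ∀ i ∈ s, Disjoint (A i) (B i))
    (hcross : ∀ i ∈ s, ∀ j ∈ s, i ≠ j → ¬Disjoint (B i) (A j)) : #s ≤ 2 ^ (a + b) := by
  classical
  set E : Finset β := s.biUnion fun i ↦ A i ∪ B i
  have hE : ∀ i ∈ s, A i ∪ B i ⊆ E := fun i hi ↦ subset_biUnion_of_mem (fun i ↦ A i ∪ B i) hi
  have hpair : (s : Set ι).PairwiseDisjoint fun i ↦ Icc (B i) (E \ A i) := by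
    intro i hi j hj hij
    refine Finset.disjoint_left.2 fun W hWi hWj ↦ hcross i hi j hj hij ?_
    exact disjoint_of_subset_left ((mem_Icc.1 hWi).1.trans (mem_Icc.1 hWj).2) sdiff_disjoint
  have hinterval : ∀ i ∈ s, 2 ^ #E ≤ #(Icc (B i) (E \ A i)) * 2 ^ (a + b) := by
    intro i hi
    obtain ⟨hAE, hBE⟩ := union_subset_iff.1 (hE i hi)
    rw [card_Icc_finset (subset_sdiff.2 ⟨hBE, (hdisj i hi).symm⟩), card_sdiff_of_subset hAE,
      ← pow_add]
    have := hA i hi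
    have := hB i hi
    exact Nat.pow_le_pow_right two_pos (by omega)
  have hcube : (s.biUnion fun i ↦ Icc (B i) (E \ A i)) ⊆ E.powerset := by
    refine biUnion_subset.2 fun i _ W hW ↦ mem_powerset.2 ?_
    exact (mem_Icc.1 hW).2.trans sdiff_subset
  refine Nat.le_of_mul_le_mul_right (c := 2 ^ #E) ?_ (by positivity)
  calc #s * 2 ^ #E
      ≤ ∑ i ∈ s, #(Icc (B i) (E \ A i)) * 2 ^ (a + b) := card_nsmul_le_sum _ _ _ hinterval
    _ = #(s.biUnion fun i ↦ Icc (B i) (E \ A i)) * 2 ^ (a + b) := by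
        rw [card_biUnion hpair, sum_mul]
    _ ≤ 2 ^ #E * 2 ^ (a + b) := by
        gcongr
        exact (card_le_card hcube).trans_eq (card_powerset E)
    _ = 2 ^ (a + b) * 2 ^ #E := mul_comm _ _

end SetPairs

section Compatible

variable {ι β : Type*} [DecidableEq β] {V : ι → Finset β} {t : ℕ}

/-- The family of sets `V x`, `x ∈ F`, is `t`-intersecting. Families are indexed, so that
families of permutations become set families through their graphs. -/
def IsIntersectingFamily (V : ι → Finset β) (t : ℕ) (F : Finset ι) : Prop :=
  ∀ x ∈ F, ∀ y ∈ F, t ≤ #(V x ∩ V y)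

/-- The indices whose sets meet every member of `G` in at least `t` points: the upper bound on
the `t`-intersecting families that contain `G`. -/
def compatible [Fintype ι] (V : ι → Finset β) (t : ℕ) (G : Finset ι) : Finset ι :=
  {x | ∀ y ∈ G, t ≤ #(V x ∩ V y)}

theorem mem_compatible [Fintype ι] {G : Finset ι} {x : ι} :
    x ∈ compatible V t G ↔ ∀ y ∈ G, t ≤ #(V x ∩ V y) := by
  simp [compatible]

theorem compatible_anti [Fintype ι] {G H : Finset ι} (h : G ⊆ H) :
    compatible V t H ⊆ compatible V t G :=
  fun _ hx ↦ mem_compatible.2 fun y hy ↦ mem_compatible.1 hx y (h hy)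

theorem card_le_four_pow_of_irredundant {G : Finset ι} {k : ℕ}
    (hk : ∀ x, #(V x) ≤ k)
    (hG : ∀ g ∈ G, ∃ x, #(V x ∩ V g) < t ∧ ∀ g' ∈ G, g' ≠ g → t ≤ #(V x ∩ V g')) :
    #G ≤ 4 ^ k := by
  choose! x hlt hle using hG
  have hcross : ∀ g ∈ G, ∀ g' ∈ G, g ≠ g' → ¬Disjoint (V (x g) \ V g) (V g') := by
    intro g hg g' hg' hne hdisj
    have hsub : V (x g) ∩ V g' ⊆ V (x g) ∩ V g := by
      intro e he
      obtain ⟨hex, heg'⟩ := mem_inter.1 he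
      refine mem_inter.2 ⟨hex, ?_⟩
      by_contra heg
      exact Finset.disjoint_left.1 hdisj (mem_sdiff.2 ⟨hex, heg⟩) heg'
    exact (hlt g hg).not_ge ((hle g hg g' hg' hne.symm).trans (card_le_card hsub))
  calc #G ≤ 2 ^ (k + k) :=
        card_le_two_pow_of_setPairs (fun g _ ↦ hk g)
          (fun g _ ↦ (card_le_card sdiff_subset).trans (hk (x g)))
          (fun _ _ ↦ disjoint_sdiff) hcross
    _ = 4 ^ k := by rw [← two_mul, pow_mul]; norm_num

theorem exists_card_le_compatible_eq [Fintype ι] {k : ℕ} (hk : ∀ x, #(V x) ≤ k)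
    (F : Finset ι) : ∃ G : Finset ι, #G ≤ 4 ^ k ∧ compatible V t G = compatible V t F := by
  classical
  obtain ⟨G, -, hG⟩ := exists_minimal_le_of_wellFoundedLT
    (fun G ↦ compatible V t G = compatible V t F) F rfl
  refine ⟨G, card_le_four_pow_of_irredundant (t := t) hk fun g hg ↦ ?_, hG.prop⟩
  by_contra! hred
  suffices hsub : compatible V t (G.erase g) ⊆ compatible V t G by
    refine hG.not_prop_of_lt (erase_ssubset hg) ?_
    exact (hsub.antisymm (compatible_anti (erase_subset _ _))).trans hG.prop
  intro x hx
  rw [mem_compatible] at hx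
  have hxg : t ≤ #(V x ∩ V g) := by
    by_contra! hlt
    obtain ⟨g', hg', hne, hlt'⟩ := hred x hlt
    exact hlt'.not_ge (hx g' (mem_erase.2 ⟨hne, hg'⟩))
  refine mem_compatible.2 fun y hy ↦ ?_
  obtain rfl | hne := eq_or_ne y g
  exacts [hxg, hx y (mem_erase.2 ⟨hne, hy⟩)]

theorem IsIntersectingFamily.exists_superset_compatible_eq [Fintype ι]
    (hV : ∀ x, t ≤ #(V x)) {F : Finset ι} (hF : IsIntersectingFamily V t F) :
    ∃ M, F ⊆ M ∧ IsIntersectingFamily V t M ∧ compatible V t M = M := by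
  classical
  obtain ⟨M, hFM, hM⟩ := Finite.exists_le_maximal hF
  refine ⟨M, hFM, hM.prop, Subset.antisymm (fun x hx ↦ ?_) fun x hx ↦
    mem_compatible.2 (hM.prop x hx)⟩
  rw [mem_compatible] at hx
  have hins : IsIntersectingFamily V t (insert x M) := by
    intro a ha b hb
    rw [mem_insert] at ha hb
    rcases ha with rfl | ha <;> rcases hb with rfl | hb
    · rw [inter_self]; exact hV _
    · exact hx b hb
    · rw [inter_comm]; exact hx a ha
    · exact hM.prop a ha b hb
  exact hM.le_of_ge hins (subset_insert x M) (mem_insert_self x M)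

theorem card_filter_card_le_le [Fintype ι] (m : ℕ) :
    #{G : Finset ι | #G ≤ m} ≤ (Fintype.card ι + 1) ^ m := by
  classical
  have hcover : ({G : Finset ι | #G ≤ m} : Finset (Finset ι)) ⊆
      (range (m + 1)).biUnion fun i ↦ powersetCard i univ := by
    intro G hG
    simpa [Nat.lt_succ_iff] using hG
  calc #{G : Finset ι | #G ≤ m}
      ≤ ∑ i ∈ range (m + 1), #(powersetCard i (univ : Finset ι)) :=
        (card_le_card hcover).trans card_biUnion_le
    _ ≤ ∑ i ∈ range (m + 1), Fintype.card ι ^ i * 1 ^ (m - i) * m.choose i := by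
        refine sum_le_sum fun i hi ↦ ?_
        rw [card_powersetCard, card_univ, one_pow, mul_one]
        exact (Nat.choose_le_pow _ _).trans <| Nat.le_mul_of_pos_right _ <|
          Nat.choose_pos (Nat.lt_succ_iff.1 (mem_range.1 hi))
    _ = (Fintype.card ι + 1) ^ m := (add_pow _ _ _).symm

-- A family `M = compatible V t M` is determined by at most `4 ^ k` of its members.
theorem card_le_of_forall_exists_compatible_eq [Fintype ι] {k K : ℕ}
    (hk : ∀ x, #(V x) ≤ k) {𝓐 : Finset (Finset ι)}
    (h𝓐 : ∀ F ∈ 𝓐, ∃ M, F ⊆ M ∧ compatible V t M = M ∧ #M ≤ K) :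
    #𝓐 ≤ (Fintype.card ι + 1) ^ 4 ^ k * 2 ^ K := by
  classical
  let 𝓖 : Finset (Finset ι) := {G | #G ≤ 4 ^ k ∧ #(compatible V t G) ≤ K}
  have hcover : 𝓐 ⊆ 𝓖.biUnion fun G ↦ (compatible V t G).powerset := by
    intro F hF
    obtain ⟨M, hFM, hM, hcard⟩ := h𝓐 F hF
    obtain ⟨G, hG, hGM⟩ := exists_card_le_compatible_eq (t := t) hk M
    rw [hM] at hGM
    exact mem_biUnion.2 ⟨G, mem_filter.2 ⟨mem_univ _, hG, hGM ▸ hcard⟩,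
      mem_powerset.2 (hGM ▸ hFM)⟩
  have h𝓖 : #𝓖 ≤ (Fintype.card ι + 1) ^ 4 ^ k :=
    (card_le_card (monotone_filter_right _ fun _ _ ↦ And.left)).trans (card_filter_card_le_le _)
  refine (card_le_card hcover).trans ((card_biUnion_le_card_mul _ _ (2 ^ K) ?_).trans
    (Nat.mul_le_mul_right _ h𝓖))
  intro G hG
  rw [card_powerset]
  exact Nat.pow_le_pow_right two_pos (mem_filter.1 hG).2.2

end Compatible

section Density

variable {ι κ β : Type*} [DecidableEq β] {V : ι → Finset β} {W : κ → Finset β}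
  {F G : Finset ι} {A : Finset β}

/-- The members of `F` whose set contains `A`; the usual notation is `F[A]`. -/
def containing (V : ι → Finset β) (F : Finset ι) (A : Finset β) : Finset ι :=
  {x ∈ F | A ⊆ V x}

theorem mem_containing {x : ι} : x ∈ containing V F A ↔ x ∈ F ∧ A ⊆ V x := by
  simp [containing]

theorem containing_subset : containing V F A ⊆ F :=
  filter_subset _ _

theorem containing_empty : containing V F ∅ = F := by
  simp [containing]

theorem containing_mono (h : G ⊆ F) : containing V G A ⊆ containing V F A :=
  filter_subset_filter _ h

theorem card_le_card_filter_add_card_biUnion_containing [DecidableEq ι] {𝒮 𝒯 : Finset (Finset β)}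
    (h : ∀ S ∈ 𝒮, ∃ T ∈ 𝒯, T ⊆ S) :
    #F ≤ #{x ∈ F | ∀ S ∈ 𝒮, ¬S ⊆ V x} + #(𝒯.biUnion (containing V F)) := by
  refine (card_le_card fun x hx ↦ ?_).trans (card_union_le _ _)
  by_cases hx𝒮 : ∀ S ∈ 𝒮, ¬S ⊆ V x
  · exact mem_union_left _ (mem_filter.2 ⟨hx, hx𝒮⟩)
  push Not at hx𝒮
  obtain ⟨S, hS, hSx⟩ := hx𝒮
  obtain ⟨T, hT, hTS⟩ := h S hS
  exact mem_union_right _ (mem_biUnion.2 ⟨T, hT, mem_containing.2 ⟨hx, hTS.trans hSx⟩⟩)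

theorem containing_product {G : Finset κ} :
    containing (fun p : ι × κ ↦ V p.1 ∩ W p.2) (F ×ˢ G) A =
      containing V F A ×ˢ containing W G A := by
  ext p
  simp only [mem_containing, mem_product, subset_inter_iff]
  tauto

theorem containing_sdiff_containing {S : Finset β} (h : Disjoint S A) :
    containing (fun x ↦ V x \ S) (containing V F S) A = containing V F (S ∪ A) := by
  ext x
  simp only [mem_containing, subset_sdiff, union_subset_iff, h.symm, and_true, and_assoc]

theorem sum_choose_card_eq_sum_card_containing [Fintype β] (F : Finset ι) (s : ℕ) :
    ∑ x ∈ F, (#(V x)).choose s = ∑ A ∈ powersetCard s univ, #(containing V F A) := by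
  have h := sum_card_bipartiteAbove_eq_sum_card_bipartiteBelow
    (s := F) (t := powersetCard s (univ : Finset β)) fun x A ↦ A ⊆ V x
  refine (sum_congr rfl fun x _ ↦ ?_).trans h
  rw [← card_powersetCard]
  congr 1
  ext A
  simp [bipartiteAbove, mem_powersetCard, and_comm]

/-- The proportion of the members of `F` whose set contains `A`; it is `0` for empty `F`. -/
noncomputable def density (V : ι → Finset β) (F : Finset ι) (A : Finset β) : ℝ :=
  #(containing V F A) / #F

theorem density_nonneg : 0 ≤ density V F A := by
  unfold density
  positivity

theorem density_le_one : density V F A ≤ 1 :=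
  div_le_one_of_le₀ (mod_cast card_le_card containing_subset) (by positivity)

theorem density_empty_right (hF : F.Nonempty) : density V F ∅ = 1 := by
  rw [density, containing_empty, div_self]
  exact_mod_cast hF.card_pos.ne'

theorem density_anti_left {V' : ι → Finset β} (h : ∀ x, V' x ⊆ V x) :
    density V' F A ≤ density V F A := by
  have hsub : containing V' F A ⊆ containing V F A :=
    monotone_filter_right _ fun x _ hx ↦ hx.trans (h x)
  unfold density
  gcongr

theorem density_product {G : Finset κ} :
    density (fun p : ι × κ ↦ V p.1 ∩ W p.2) (F ×ˢ G) A = density V F A * density W G A := by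
  simp only [density, containing_product, card_product, Nat.cast_mul, mul_div_mul_comm]

variable [Fintype β]

theorem sum_density_eq (V : ι → Finset β) (F : Finset ι) (s : ℕ) :
    ∑ A ∈ powersetCard s univ, density V F A = (∑ x ∈ F, ((#(V x)).choose s : ℝ)) / #F := by
  have h : (∑ x ∈ F, ((#(V x)).choose s : ℝ)) =
      ∑ A ∈ powersetCard s univ, (#(containing V F A) : ℝ) :=
    mod_cast sum_choose_card_eq_sum_card_containing F s
  simp only [density, h, sum_div]

theorem sum_density_le {n : ℕ} (hV : ∀ x, #(V x) ≤ n) (s : ℕ) :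
    ∑ A ∈ powersetCard s univ, density V F A ≤ n.choose s := by
  rw [sum_density_eq]
  refine div_le_of_le_mul₀ (by positivity) (by positivity) ?_
  rw [mul_comm, ← nsmul_eq_mul]
  exact sum_le_card_nsmul _ _ _ fun x _ ↦ mod_cast Nat.choose_le_choose s (hV x)

theorem le_sum_density (hF : F.Nonempty) {s : ℕ} {r : ℝ} (hr : ∀ x ∈ F, r ≤ (#(V x)).choose s) :
    r ≤ ∑ A ∈ powersetCard s univ, density V F A := by
  rw [sum_density_eq, le_div_iff₀ (mod_cast hF.card_pos), mul_comm, ← nsmul_eq_mul]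
  exact card_nsmul_le_sum _ _ _ hr

theorem one_add_choose_two_le {m : ℕ} (hm : m ≠ 0) : 1 + m.choose 2 ≤ m + m.choose 3 := by
  obtain ⟨k, rfl⟩ := Nat.exists_eq_add_one_of_ne_zero hm
  have h2 : (k + 1).choose 2 = k + k.choose 2 := by
    rw [Nat.choose_succ_succ', Nat.choose_one_right]
  have h3 : (k + 1).choose 3 = k.choose 2 + k.choose 3 := Nat.choose_succ_succ' k 2
  omega

theorem one_add_sum_density_two_le (hF : F.Nonempty) (hV : ∀ x ∈ F, (V x).Nonempty) :
    1 + ∑ A ∈ powersetCard 2 univ, density V F A ≤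
      ∑ A ∈ powersetCard 1 univ, density V F A + ∑ A ∈ powersetCard 3 univ, density V F A := by
  have hcard : (0 : ℝ) < #F := mod_cast hF.card_pos
  simp only [sum_density_eq]
  rw [← div_self hcard.ne', ← add_div, ← add_div, ← mul_one (#F : ℝ), ← nsmul_eq_mul, ← sum_const,
    ← sum_add_distrib, ← sum_add_distrib]
  refine div_le_div_of_nonneg_right (sum_le_sum fun x hx ↦ ?_) (by positivity)
  rw [Nat.choose_one_right]
  exact_mod_cast one_add_choose_two_le (hV x hx).card_pos.ne'

end Density

section Spread

variable {ι κ β : Type*} [DecidableEq β] {V : ι → Finset β} {W : κ → Finset β} {c : ℝ} {k : ℕ}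

/-- `F` is spread: prescribing `j ≤ k` elements leaves at most a `c ^ j` fraction of `F`.
Spreadness of `F` outside a set `S` is expressed by passing to the sets `V x \ S`. -/
def IsSpread (V : ι → Finset β) (c : ℝ) (k : ℕ) (F : Finset ι) : Prop :=
  F.Nonempty ∧ ∀ A : Finset β, #A ≤ k → density V F A ≤ c ^ #A

theorem IsSpread.anti_left {V' : ι → Finset β} {F : Finset ι} (hF : IsSpread V c k F)
    (h : ∀ x, V' x ⊆ V x) : IsSpread V' c k F :=
  ⟨hF.1, fun A hA ↦ (density_anti_left h).trans (hF.2 A hA)⟩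

theorem IsSpread.mono_const {c' : ℝ} {F : Finset ι} (hF : IsSpread V c k F) (hc : 0 ≤ c)
    (hcc' : c ≤ c') : IsSpread V c' k F :=
  ⟨hF.1, fun A hA ↦ (hF.2 A hA).trans (by gcongr)⟩

theorem IsSpread.one_sub_mul_card_le {F : Finset ι} (hF : IsSpread V c k F) (hk : 1 ≤ k)
    (T : Finset β) : (1 - #T * c) * #F ≤ #{x ∈ F | Disjoint (V x) T} := by
  classical
  have hcover : F ⊆ {x ∈ F | Disjoint (V x) T} ∪ T.biUnion fun e ↦ containing V F {e} := by
    intro x hx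
    by_cases hd : Disjoint (V x) T
    · exact mem_union_left _ (mem_filter.2 ⟨hx, hd⟩)
    · obtain ⟨e, hex, heT⟩ := not_disjoint_iff.1 hd
      exact mem_union_right _ <| mem_biUnion.2
        ⟨e, heT, mem_containing.2 ⟨hx, singleton_subset_iff.2 hex⟩⟩
  have hsingle : ∀ e ∈ T, (#(containing V F {e}) : ℝ) ≤ c * #F := by
    intro e _
    have h := hF.2 {e} (by simpa using hk)
    rwa [density, card_singleton, pow_one, div_le_iff₀ (mod_cast hF.1.card_pos)] at h
  have hcard : (#F : ℝ) ≤ #{x ∈ F | Disjoint (V x) T} + ∑ e ∈ T, (#(containing V F {e}) : ℝ) :=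
    mod_cast (card_le_card hcover).trans ((card_union_le _ _).trans
      (Nat.add_le_add_left card_biUnion_le _))
  have hsum := sum_le_card_nsmul T _ _ hsingle
  rw [nsmul_eq_mul] at hsum
  linarith

theorem IsSpread.filter_disjoint {F : Finset ι} (hF : IsSpread V c k F) (hk : 1 ≤ k) (hc : 0 ≤ c)
    {T : Finset β} (hT : #T * c < 1) :
    IsSpread V (c / (1 - #T * c)) k {x ∈ F | Disjoint (V x) T} := by
  have hloss := hF.one_sub_mul_card_le hk T
  set F' : Finset ι := {x ∈ F | Disjoint (V x) T}
  have hδ : 0 < 1 - #T * c := sub_pos.2 hT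
  have hδ' : 1 - #T * c ≤ 1 := by linarith [show 0 ≤ #T * c by positivity]
  have hF0 : (0 : ℝ) < #F := mod_cast hF.1.card_pos
  have hF'0 : (0 : ℝ) < #F' := (mul_pos hδ hF0).trans_le hloss
  refine ⟨card_pos.1 (mod_cast hF'0), fun A hA ↦ ?_⟩
  obtain hA0 | hA0 := eq_or_ne #A 0
  · rw [hA0, pow_zero]
    exact density_le_one
  calc density V F' A
      ≤ #(containing V F A) / ((1 - #T * c) * #F) := by
        unfold density
        gcongr
        exact containing_mono (filter_subset _ _)
    _ = density V F A / (1 - #T * c) := by rw [density, div_div, mul_comm]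
    _ ≤ c ^ #A / (1 - #T * c) ^ #A := by
        gcongr
        · exact hF.2 A hA
        · exact pow_le_of_le_one hδ.le hδ' hA0
    _ = (c / (1 - #T * c)) ^ #A := (div_pow _ _ _).symm

-- `S` maximises `density V F S / c ^ #S`, so that by `hdense` it has fewer than `q - k` elements
-- and can be enlarged by any set of at most `k` elements.
theorem exists_isSpread_sdiff_containing [Finite β] {F : Finset ι} (hF : F.Nonempty) (hc : 0 < c)
    {q : ℕ} (hdense : ∀ S : Finset β, #S ≤ q → q < #S + k → density V F S < c ^ #S) :
    ∃ S : Finset β, #S ≤ q ∧ IsSpread (fun x ↦ V x \ S) c k (containing V F S) := by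
  cases nonempty_fintype β
  obtain ⟨S, hS, hmax⟩ := exists_max_image ({S | #S ≤ q} : Finset (Finset β))
    (fun S ↦ density V F S / c ^ #S) ⟨∅, by simp⟩
  simp only [mem_filter_univ] at hS hmax
  have hlarge : c ^ #S ≤ density V F S := by
    have h := hmax ∅ (by simp)
    rwa [density_empty_right hF, card_empty, pow_zero, div_one, one_le_div (by positivity)] at h
  have hSk : #S + k ≤ q := by
    by_contra! h
    exact hlarge.not_gt (hdense S hS h)
  have hF0 : (0 : ℝ) < #F := mod_cast hF.card_pos
  have hFS : (0 : ℝ) < #(containing V F S) := by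
    have h : 0 < density V F S := (by positivity : 0 < c ^ #S).trans_le hlarge
    rwa [density, div_pos_iff_of_pos_right hF0] at h
  refine ⟨S, hS, card_pos.1 (mod_cast hFS), fun A hA ↦ ?_⟩
  by_cases hdisj : Disjoint S A
  · have h := hmax (S ∪ A) ((card_union_le _ _).trans (by omega))
    rw [card_union_of_disjoint hdisj, pow_add, div_le_div_iff₀ (by positivity) (by positivity),
      mul_comm (c ^ #S), ← mul_assoc, mul_le_mul_iff_left₀ (by positivity), density, density,
      div_mul_eq_mul_div, div_le_div_iff_of_pos_right hF0] at h
    rw [density, containing_sdiff_containing hdisj, div_le_iff₀ hFS]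
    linarith
  · have hempty : containing (fun x ↦ V x \ S) (containing V F S) A = ∅ := by
      refine eq_empty_of_forall_notMem fun x hx ↦ hdisj ?_
      exact (subset_sdiff.1 (mem_containing.1 hx).2).2.symm
    rw [density, hempty, card_empty, Nat.cast_zero, zero_div]
    positivity

end Spread

section SpreadPair

variable {ι κ β : Type*} [DecidableEq β] {V : ι → Finset β} {W : κ → Finset β} {c : ℝ} {k : ℕ}
  {F : Finset ι} {G : Finset κ}

theorem IsSpread.sum_density_mul_le [Fintype β] (hF : IsSpread V c k F) (hc : 0 ≤ c) {n s : ℕ}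
    (hW : ∀ y, #(W y) ≤ n) (hs : s ≤ k) :
    ∑ A ∈ powersetCard s univ, density V F A * density W G A ≤ (c * n) ^ s / s ! := by
  calc ∑ A ∈ powersetCard s univ, density V F A * density W G A
      ≤ ∑ A ∈ powersetCard s univ, c ^ s * density W G A := by
        refine sum_le_sum fun A hA ↦ ?_
        have hAs := (mem_powersetCard.1 hA).2
        exact mul_le_mul_of_nonneg_right (hAs ▸ hF.2 A (hAs.trans_le hs)) density_nonneg
    _ = c ^ s * ∑ A ∈ powersetCard s univ, density W G A := (mul_sum _ _ _).symm
    _ ≤ c ^ s * (n ^ s / s !) := by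
        gcongr
        exact (sum_density_le hW s).trans (Nat.choose_le_pow_div s n)
    _ = (c * n) ^ s / s ! := by rw [mul_pow, mul_div_assoc]

-- Sums the inequality `(c ^ s - density V F A) * (c ^ s - density W G A) ≥ 0` over the `s`-sets.
theorem IsSpread.le_sum_density_mul [Fintype β] (hF : IsSpread V c k F) (hG : IsSpread W c k G)
    {s : ℕ} (hs : s ≤ k) :
    c ^ s * (∑ A ∈ powersetCard s univ, density V F A + ∑ A ∈ powersetCard s univ, density W G A)
        - (Fintype.card β).choose s * (c ^ s) ^ 2 ≤
      ∑ A ∈ powersetCard s univ, density V F A * density W G A := by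
  calc _ = ∑ A ∈ powersetCard s univ,
        (c ^ s * (density V F A + density W G A) - (c ^ s) ^ 2) := by
        rw [sum_sub_distrib, ← mul_sum, sum_add_distrib, sum_const, card_powersetCard, card_univ,
          nsmul_eq_mul]
    _ ≤ ∑ A ∈ powersetCard s univ, density V F A * density W G A := by
        refine sum_le_sum fun A hA ↦ ?_
        have hAs := (mem_powersetCard.1 hA).2
        have hFA := hF.2 A (hAs.trans_le hs)
        have hGA := hG.2 A (hAs.trans_le hs)
        rw [hAs] at hFA hGA
        linarith [mul_nonneg (sub_nonneg.2 hFA) (sub_nonneg.2 hGA)]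

-- If all pairs met, `1 + E[C(X, 2)] ≤ E[X] + E[C(X, 3)]` would hold for the size `X` of the
-- intersection of a random pair; but `X` is nearly Poisson of mean at most `11 / 10`.
theorem IsSpread.exists_disjoint [Fintype β] {n : ℕ} (hβ : Fintype.card β ≤ n ^ 2)
    (hW : ∀ y, #(W y) ≤ n)
    (hV2 : ∀ x ∈ F, 9 / 20 * (n : ℝ) ^ 2 ≤ (#(V x)).choose 2)
    (hW2 : ∀ y ∈ G, 9 / 20 * (n : ℝ) ^ 2 ≤ (#(W y)).choose 2) (hc : 0 ≤ c)
    (hcn : c * n = 11 / 10) (hF : IsSpread V c 3 F) (hG : IsSpread W c 3 G) :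
    ∃ x ∈ F, ∃ y ∈ G, Disjoint (V x) (W y) := by
  by_contra! hmeet
  have hbonferroni := one_add_sum_density_two_le (V := fun p : ι × κ ↦ V p.1 ∩ W p.2)
    (hF.1.product hG.1) fun p hp ↦ not_disjoint_iff_nonempty_inter.1 <|
      hmeet p.1 (mem_product.1 hp).1 p.2 (mem_product.1 hp).2
  simp only [density_product] at hbonferroni
  have hone := hF.sum_density_mul_le hc hW (G := G) (show 1 ≤ 3 by norm_num)
  have hthree := hF.sum_density_mul_le hc hW (G := G) le_rfl
  have htwo := hF.le_sum_density_mul hG (show 2 ≤ 3 by norm_num)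
  have hpairs : ((Fintype.card β).choose 2 : ℝ) ≤ (n : ℝ) ^ 4 / 2 := by
    calc ((Fintype.card β).choose 2 : ℝ) ≤ ((n ^ 2).choose 2 : ℕ) :=
          mod_cast Nat.choose_le_choose 2 hβ
      _ ≤ ((n ^ 2 : ℕ) : ℝ) ^ 2 / 2 ! := Nat.choose_le_pow_div 2 _
      _ = (n : ℝ) ^ 4 / 2 := by push_cast [Nat.factorial]; ring
  have hmain : 9 / 10 * (11 / 10) ^ 2 - (11 / 10) ^ 4 / 2 ≤
      ∑ A ∈ powersetCard 2 univ, density V F A * density W G A := by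
    calc (9 / 10 * (11 / 10) ^ 2 - (11 / 10) ^ 4 / 2 : ℝ)
        = c ^ 2 * (9 / 20 * (n : ℝ) ^ 2 + 9 / 20 * (n : ℝ) ^ 2) -
            (n : ℝ) ^ 4 / 2 * (c ^ 2) ^ 2 := by rw [← hcn]; ring
      _ ≤ _ := by gcongr; exacts [le_sum_density hF.1 hV2, le_sum_density hG.1 hW2]
      _ ≤ _ := htwo
  rw [hcn] at hone hthree
  norm_num [Nat.factorial] at hone hthree hmain
  linarith

theorem le_choose_two_of_two_mul_add_le {n q m : ℕ} (hn : 100 ≤ n) (hq : 100 * q ≤ n)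
    (hm : n ≤ m + 2 * q) : 9 / 20 * (n : ℝ) ^ 2 ≤ m.choose 2 := by
  have hn' : (100 : ℝ) ≤ n := mod_cast hn
  have hq' : 100 * (q : ℝ) ≤ n := mod_cast hq
  have hm' : (n : ℝ) ≤ m + 2 * q := mod_cast hm
  rw [Nat.cast_choose_two]
  nlinarith [mul_le_mul (show 98 / 100 * (n : ℝ) ≤ m by linarith)
    (show 97 / 100 * (n : ℝ) ≤ m - 1 by linarith) (by positivity) (by linarith)]

theorem IsSpread.filter_disjoint_of_card_le {n q : ℕ} (hn : 0 < n) (hq : 100 * q ≤ n)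
    (hF : IsSpread V (21 / (20 * n)) 3 F) {T : Finset β} (hT : #T ≤ q) :
    IsSpread V (11 / (10 * n)) 3 {x ∈ F | Disjoint (V x) T} := by
  have : (0 : ℝ) < n := mod_cast hn
  have hTn : 100 * (#T : ℝ) ≤ n := mod_cast (Nat.mul_le_mul_left 100 hT).trans hq
  have hloss : #T * (21 / (20 * n) : ℝ) ≤ 21 / 2000 := by
    rw [mul_div_assoc', div_le_div_iff₀ (by positivity) (by norm_num)]
    linarith
  refine (hF.filter_disjoint (by norm_num) (by positivity) (by linarith)).mono_const ?_ ?_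
  · exact div_nonneg (by positivity) (by linarith)
  · calc (21 / (20 * n) : ℝ) / (1 - #T * (21 / (20 * n))) ≤ 21 / (20 * n) / (21 / 22) := by
          gcongr
          linarith
      _ = 11 / (10 * n) := by field_simp; norm_num

theorem IsSpread.exists_inter_subset [Fintype β] {n q : ℕ} (hn : 100 ≤ n) (hq : 100 * q ≤ n)
    (hβ : Fintype.card β ≤ n ^ 2) (hV : ∀ x, #(V x) = n) (hW : ∀ y, #(W y) = n)
    {S T : Finset β} (hS : #S ≤ q) (hT : #T ≤ q)
    (hF : IsSpread (fun x ↦ V x \ S) (21 / (20 * n)) 3 F)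
    (hG : IsSpread (fun y ↦ W y \ T) (21 / (20 * n)) 3 G) :
    ∃ x ∈ F, ∃ y ∈ G, V x ∩ W y ⊆ S ∩ T := by
  have : (n : ℝ) ≠ 0 := by positivity
  have hcard : ∀ B : Finset β, #B = n → n ≤ #(B \ (S ∪ T)) + 2 * q := by
    intro B hB
    have := le_card_sdiff (S ∪ T) B
    have := card_union_le S T
    omega
  have hF' := (hF.filter_disjoint_of_card_le (by omega) hq hT).anti_left
    fun x ↦ sdiff_subset_sdiff (Subset.refl (V x)) (subset_union_left (s₁ := S) (s₂ := T))
  have hG' := (hG.filter_disjoint_of_card_le (by omega) hq hS).anti_left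
    fun y ↦ sdiff_subset_sdiff (Subset.refl (W y)) (subset_union_right (s₁ := S) (s₂ := T))
  obtain ⟨x, hx, y, hy, hxy⟩ := hF'.exists_disjoint hβ
    (fun y ↦ (card_le_card sdiff_subset).trans (hW y).le)
    (fun x _ ↦ le_choose_two_of_two_mul_add_le hn hq (hcard _ (hV x)))
    (fun y _ ↦ le_choose_two_of_two_mul_add_le hn hq (hcard _ (hW y)))
    (by positivity) (by field_simp) hG'
  obtain ⟨hxF, hxT⟩ := mem_filter.1 hx
  obtain ⟨hyG, hyS⟩ := mem_filter.1 hy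
  refine ⟨x, hxF, y, hyG, fun e he ↦ ?_⟩
  rw [Finset.disjoint_left] at hxy hxT hyS
  have hxy := @hxy e
  have hxT := @hxT e
  have hyS := @hyS e
  simp only [mem_sdiff, mem_union, mem_inter] at he hxy hxT hyS ⊢
  tauto

end SpreadPair

section Kernels

variable {ι β : Type*} [DecidableEq β] [Fintype β] {V : ι → Finset β}

open Classical in
/-- The sets `S` of at most `q` elements outside which some subfamily of `F` is spread. When all
`V x` have `n` elements, the constant `21 / (20 n)` makes two sets taken from spread families
meet nearly as two random `n`-subsets of an `n²`-set would. -/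
noncomputable def spreadKernels (V : ι → Finset β) (n q : ℕ) (F : Finset ι) :
    Finset (Finset β) :=
  {S | #S ≤ q ∧ ∃ G ⊆ F, IsSpread (fun x ↦ V x \ S) (21 / (20 * n)) 3 G}

theorem mem_spreadKernels {n q : ℕ} {F : Finset ι} {S : Finset β} :
    S ∈ spreadKernels V n q F ↔
      #S ≤ q ∧ ∃ G ⊆ F, IsSpread (fun x ↦ V x \ S) (21 / (20 * n)) 3 G := by
  simp [spreadKernels]

theorem IsIntersectingFamily.le_card_inter_of_mem_spreadKernels {n q t : ℕ} (hn : 100 ≤ n)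
    (hq : 100 * q ≤ n) (hβ : Fintype.card β ≤ n ^ 2) (hV : ∀ x, #(V x) = n) {F : Finset ι}
    (hF : IsIntersectingFamily V t F) {S T : Finset β} (hS : S ∈ spreadKernels V n q F)
    (hT : T ∈ spreadKernels V n q F) : t ≤ #(S ∩ T) := by
  obtain ⟨hSq, G, hGF, hG⟩ := mem_spreadKernels.1 hS
  obtain ⟨hTq, H, hHF, hH⟩ := mem_spreadKernels.1 hT
  obtain ⟨x, hx, y, hy, hxy⟩ := hG.exists_inter_subset hn hq hβ hV hV hSq hTq hH
  exact (hF x (hGF hx) y (hHF hy)).trans (card_le_card hxy)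

theorem card_filter_forall_spreadKernels_not_subset_lt {n q : ℕ} (hn : 0 < n) {F : Finset ι}
    {m : ℝ} (hm : 0 < m) (hsparse : ∀ S : Finset β, #S ≤ q → q < #S + 3 →
      #(containing V F S) < (21 / (20 * n)) ^ #S * m) :
    #{x ∈ F | ∀ S ∈ spreadKernels V n q F, ¬S ⊆ V x} < m := by
  set H : Finset ι := {x ∈ F | ∀ S ∈ spreadKernels V n q F, ¬S ⊆ V x}
  by_contra! hmH
  have hHF : H ⊆ F := filter_subset _ _
  have hH0 : (0 : ℝ) < #H := hm.trans_le hmH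
  obtain ⟨S, hS, hspread⟩ := exists_isSpread_sdiff_containing (V := V) (F := H) (k := 3) (q := q)
    (c := 21 / (20 * n)) (card_pos.1 (mod_cast hH0)) (by positivity) fun S hS hSq ↦ by
      rw [density, div_lt_iff₀ hH0]
      calc (#(containing V H S) : ℝ) ≤ #(containing V F S) :=
            mod_cast card_le_card (containing_mono hHF)
        _ < (21 / (20 * n)) ^ #S * m := hsparse S hS hSq
        _ ≤ (21 / (20 * n)) ^ #S * #H := by gcongr
  obtain ⟨x, hx⟩ := hspread.1
  obtain ⟨hxH, hSx⟩ := mem_containing.1 hx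
  exact (mem_filter.1 hxH).2 S
    (mem_spreadKernels.2 ⟨hS, _, containing_subset.trans hHF, hspread⟩) hSx

end Kernels

section FinsetLemmas

variable {ι β : Type*} [DecidableEq β]

theorem exists_insert_subset_of_le_card_inter {R S T : Finset β} (hTS : T ⊆ S) (hTR : ¬T ⊆ R)
    (hRS : #T ≤ #(S ∩ R)) : ∃ e ∈ R \ T, insert e T ⊆ S := by
  by_contra! h
  have hsub : S ∩ R ⊆ T := by
    intro e he
    obtain ⟨heS, heR⟩ := mem_inter.1 he
    by_contra heT
    exact h e (mem_sdiff.2 ⟨heR, heT⟩) (insert_subset heS hTS)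
  exact hTR <| (eq_of_subset_of_card_le hsub hRS) ▸ inter_subset_right

-- Fix `S₁ ∈ 𝒮`. Each `S ∈ 𝒮` contains a `t`-subset `T` of `S₁`, and some `R T ∈ 𝒮` omits
-- part of `T`, so that `S` contains an element of `R T` beyond `T`.
theorem exists_cover_card_eq_add_one {q t : ℕ} {𝒮 : Finset (Finset β)} (hq : ∀ S ∈ 𝒮, #S ≤ q)
    (hinter : ∀ S ∈ 𝒮, ∀ T ∈ 𝒮, t ≤ #(S ∩ T))
    (hcommon : ∀ T : Finset β, #T = t → ∃ S ∈ 𝒮, ¬T ⊆ S) :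
    ∃ 𝒯 : Finset (Finset β), #𝒯 ≤ q ^ (t + 1) ∧ (∀ T ∈ 𝒯, #T = t + 1) ∧
      ∀ S ∈ 𝒮, ∃ T ∈ 𝒯, T ⊆ S := by
  obtain rfl | ⟨S₁, hS₁⟩ := 𝒮.eq_empty_or_nonempty
  · exact ⟨∅, by simp⟩
  choose! R hR hTR using hcommon
  refine ⟨(powersetCard t S₁).biUnion fun T ↦ (R T \ T).image fun e ↦ insert e T, ?_, ?_, ?_⟩
  · rw [pow_succ]
    refine (card_biUnion_le_card_mul _ _ q fun T hT ↦ ?_).trans (Nat.mul_le_mul_right q ?_)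
    · exact (card_image_le.trans (card_le_card sdiff_subset)).trans
        (hq _ (hR T (mem_powersetCard.1 hT).2))
    · rw [card_powersetCard]
      exact (Nat.choose_le_pow _ _).trans (Nat.pow_le_pow_left (hq S₁ hS₁) t)
  · intro T' hT'
    obtain ⟨T, hT, hT'⟩ := mem_biUnion.1 hT'
    obtain ⟨e, he, rfl⟩ := mem_image.1 hT'
    rw [card_insert_of_notMem (mem_sdiff.1 he).2, (mem_powersetCard.1 hT).2]
  · intro S hS
    obtain ⟨T, hTsub, hT⟩ := exists_subset_card_eq (hinter S hS S₁ hS₁)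
    obtain ⟨e, he, hins⟩ := exists_insert_subset_of_le_card_inter
      (hTsub.trans inter_subset_left) (hTR T hT) (hT.le.trans (hinter S hS _ (hR T hT)))
    refine ⟨insert e T, mem_biUnion.2 ⟨T, ?_, mem_image_of_mem _ he⟩, hins⟩
    exact mem_powersetCard.2 ⟨hTsub.trans inter_subset_right, hT⟩

theorem sum_card_le_card_biUnion_add {s : Finset ι} {A : ι → Finset β} {m : ℕ}
    (hA : ∀ i ∈ s, ∀ j ∈ s, i ≠ j → #(A i ∩ A j) ≤ m) :
    ∑ i ∈ s, #(A i) ≤ #(s.biUnion A) + #s ^ 2 * m := by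
  classical
  induction s using Finset.induction_on with
  | empty => simp
  | insert a s has ih =>
    have hsum := ih fun i hi j hj ↦ hA i (mem_insert_of_mem hi) j (mem_insert_of_mem hj)
    have hnew : #(A a ∩ s.biUnion A) ≤ #s * m := by
      rw [inter_biUnion]
      refine card_biUnion_le_card_mul _ _ _ fun i hi ↦ ?_
      exact hA a (mem_insert_self a s) i (mem_insert_of_mem hi) (by rintro rfl; exact has hi)
    have hunion := card_union_add_card_inter (A a) (s.biUnion A)
    rw [sum_insert has, biUnion_insert, card_insert_of_notMem has]
    nlinarith

end FinsetLemmas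

section Perm

variable {α : Type*}

theorem factorial_le_three_mul_numDerangements : ∀ {n : ℕ}, n ≠ 1 → n ! ≤ 3 * numDerangements n
  | 0, _ => by decide
  | 1, h => absurd rfl h
  | 2, _ => by decide
  | 3, _ => by decide
  | n + 4, _ => by
    have h2 := factorial_le_three_mul_numDerangements (show n + 2 ≠ 1 by omega)
    have h3 := factorial_le_three_mul_numDerangements (show n + 3 ≠ 1 by omega)
    calc (n + 4)! = (n + 3) * ((n + 2)! + (n + 3)!) := by
          simp only [Nat.factorial_succ]
          ring
      _ ≤ (n + 3) * (3 * numDerangements (n + 2) + 3 * numDerangements (n + 3)) := by gcongr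
      _ = 3 * numDerangements (n + 4) := by
          rw [← mul_add, mul_left_comm]
          exact congrArg (3 * ·) (numDerangements_add_two (n + 2)).symm

theorem mul_ofSubtype_injective (σ : Equiv.Perm α) (p : α → Prop) [DecidablePred p] :
    Function.Injective fun τ : Equiv.Perm {i // p i} ↦ σ * Equiv.Perm.ofSubtype τ :=
  (mul_right_injective σ).comp Equiv.Perm.ofSubtype_injective

theorem exists_perm_subtype_eq [Finite α] (p : α → Prop) (θ : Equiv.Perm α) :
    ∃ ρ : Equiv.Perm {i // p i}, ∀ i : {i // p i}, p (θ i) → (ρ i : α) = θ i := by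
  classical
  let e : {i : {i // p i} // p (θ i)} ≃ {j : {i // p i} // p (θ.symm j)} :=
    { toFun := fun i ↦ ⟨⟨θ i, i.2⟩, by simpa using i.1.2⟩
      invFun := fun j ↦ ⟨⟨θ.symm j, j.2⟩, by simpa using j.1.2⟩
      left_inv := fun i ↦ by simp
      right_inv := fun j ↦ by simp }
  exact ⟨e.extendSubtype, fun i hi ↦ by rw [e.extendSubtype_apply_of_mem i hi]; rfl⟩

theorem numDerangements_le_card_avoiding [Fintype α] [DecidableEq α] (p : α → Prop)
    [DecidablePred p] (θ : Equiv.Perm α) :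
    numDerangements (Fintype.card {i // p i}) ≤
      #{τ : Equiv.Perm {i // p i} | ∀ i, (τ i : α) ≠ θ i} := by
  obtain ⟨ρ, hρ⟩ := exists_perm_subtype_eq p θ
  rw [← card_derangements_eq_numDerangements, ← Fintype.card_coe]
  refine Fintype.card_le_of_injective
    (fun τ ↦ ⟨ρ * τ.1, mem_filter.2 ⟨mem_univ _, fun i hi ↦ τ.2 i (ρ.injective ?_)⟩⟩)
    fun τ τ' h ↦ Subtype.ext (mul_left_cancel (congrArg Subtype.val h))
  rw [Equiv.Perm.mul_apply] at hi
  exact Subtype.ext (hi.trans (hρ i (hi ▸ (ρ (τ.1 i)).2)).symm)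

end Perm

section PermGraph

variable {α : Type*} [Fintype α] [DecidableEq α]

/-- The graph of a permutation. It turns agreement of permutations into intersection of sets. -/
def permGraph (σ : Equiv.Perm α) : Finset (α × α) :=
  {e | σ e.1 = e.2}

theorem mem_permGraph {σ : Equiv.Perm α} {e : α × α} : e ∈ permGraph σ ↔ σ e.1 = e.2 := by
  simp [permGraph]

theorem card_permGraph_inter (σ π : Equiv.Perm α) :
    #(permGraph σ ∩ permGraph π) = #{i | σ i = π i} := by
  symm
  refine card_bij (fun i _ ↦ (i, σ i)) (fun i hi ↦ ?_) (fun i _ j _ h ↦ congrArg Prod.fst h) ?_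
  · simpa [mem_permGraph, eq_comm] using hi
  · rintro ⟨i, j⟩ h
    obtain ⟨rfl, hπ⟩ : σ i = j ∧ π i = j := by simpa [mem_permGraph] using h
    exact ⟨i, by simpa using hπ.symm, rfl⟩

theorem card_permGraph (σ : Equiv.Perm α) : #(permGraph σ) = Fintype.card α := by
  simpa using card_permGraph_inter σ σ

theorem card_image_fst_of_subset_permGraph {σ : Equiv.Perm α} {S : Finset (α × α)}
    (h : S ⊆ permGraph σ) : #(S.image Prod.fst) = #S := by
  refine card_image_of_injOn fun e he e' he' hfst ↦ Prod.ext hfst ?_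
  rw [← mem_permGraph.1 (h he), ← mem_permGraph.1 (h he'), hfst]

/-- The star of `S`: the permutations whose graph contains `S`. Stars of `t`-element partial
permutations are the maximal trivial `t`-intersecting families. -/
def permStar (S : Finset (α × α)) : Finset (Equiv.Perm α) :=
  containing permGraph univ S

theorem mem_permStar {S : Finset (α × α)} {σ : Equiv.Perm α} :
    σ ∈ permStar S ↔ S ⊆ permGraph σ := by
  simp [permStar, mem_containing]

theorem permStar_union (S T : Finset (α × α)) : permStar (S ∪ T) = permStar S ∩ permStar T := by
  ext σ
  simp [mem_permStar, union_subset_iff]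

theorem mem_permStar_iff_forall {S : Finset (α × α)} {σ π : Equiv.Perm α}
    (hS : S ⊆ permGraph σ) : π ∈ permStar S ↔ ∀ i ∈ S.image Prod.fst, π i = σ i := by
  rw [mem_permStar, forall_mem_image]
  refine forall₂_congr fun e he ↦ ?_
  rw [mem_permGraph, mem_permGraph.1 (hS he)]

theorem permStar_eq_image {S : Finset (α × α)} {σ : Equiv.Perm α} (hS : S ⊆ permGraph σ) :
    permStar S = univ.image fun τ : Equiv.Perm {i // i ∉ S.image Prod.fst} ↦
      σ * Equiv.Perm.ofSubtype τ := by
  ext π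
  rw [mem_permStar_iff_forall hS, mem_image]
  constructor
  · intro hπ
    have hfix : ∀ i, ¬i ∉ S.image Prod.fst → (σ⁻¹ * π) i = i := fun i hi ↦ by
      rw [Equiv.Perm.mul_apply, Equiv.Perm.inv_eq_iff_eq, hπ i (not_not.1 hi)]
    obtain ⟨τ, hτ⟩ := (Equiv.Perm.subtypeEquivSubtypePerm _).surjective ⟨σ⁻¹ * π, hfix⟩
    have hτ' : Equiv.Perm.ofSubtype τ = σ⁻¹ * π := congrArg Subtype.val hτ
    exact ⟨τ, mem_univ _, by rw [hτ', mul_inv_cancel_left]⟩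
  · rintro ⟨τ, -, rfl⟩ i hi
    rw [Equiv.Perm.mul_apply, Equiv.Perm.ofSubtype_apply_of_not_mem τ (not_not.2 hi)]

theorem card_compl_image_fst {S : Finset (α × α)} {σ : Equiv.Perm α} (hS : S ⊆ permGraph σ) :
    Fintype.card {i // i ∉ S.image Prod.fst} = Fintype.card α - #S := by
  rw [Fintype.card_subtype_compl, Fintype.card_coe, card_image_fst_of_subset_permGraph hS]

theorem card_permStar {S : Finset (α × α)} (hS : (permStar S).Nonempty) :
    #(permStar S) = (Fintype.card α - #S)! := by
  obtain ⟨σ, hσ⟩ := hS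
  rw [mem_permStar] at hσ
  rw [permStar_eq_image hσ, card_image_of_injective _ (mul_ofSubtype_injective σ _), card_univ,
    Fintype.card_perm, card_compl_image_fst hσ]

theorem card_permStar_le (S : Finset (α × α)) : #(permStar S) ≤ (Fintype.card α - #S)! := by
  obtain hS | hS := (permStar S).eq_empty_or_nonempty
  · simp [hS]
  · exact (card_permStar hS).le

theorem factorial_le_three_mul_card_filter_inter_subset {S : Finset (α × α)}
    (hS : (permStar S).Nonempty) (hcard : #S + 2 ≤ Fintype.card α) (σ : Equiv.Perm α) :
    (Fintype.card α - #S)! ≤ 3 * #{π ∈ permStar S | permGraph π ∩ permGraph σ ⊆ S} := by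
  obtain ⟨σ₀, hσ₀⟩ := hS
  rw [mem_permStar] at hσ₀
  have hfactorial := factorial_le_three_mul_numDerangements
    (show Fintype.card {i // i ∉ S.image Prod.fst} ≠ 1 by rw [card_compl_image_fst hσ₀]; omega)
  rw [card_compl_image_fst hσ₀] at hfactorial
  refine hfactorial.trans (Nat.mul_le_mul_left 3 ?_)
  rw [← card_compl_image_fst hσ₀, permStar_eq_image hσ₀, filter_image,
    card_image_of_injective _ (mul_ofSubtype_injective σ₀ _)]
  refine (numDerangements_le_card_avoiding _ (σ₀⁻¹ * σ)).trans <| card_le_card <|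
    monotone_filter_right _ fun τ _ hτ ↦ ?_
  rintro ⟨i, j⟩ hij
  obtain ⟨hτij, hσij⟩ := mem_inter.1 hij
  by_cases hi : i ∈ S.image Prod.fst
  · obtain ⟨e, he, rfl⟩ := mem_image.1 hi
    have hσ₀e := mem_permGraph.1 (hσ₀ he)
    rw [mem_permGraph, Equiv.Perm.mul_apply,
      Equiv.Perm.ofSubtype_apply_of_not_mem τ (not_not.2 hi), hσ₀e] at hτij
    rwa [← show e = (e.1, j) from Prod.ext rfl hτij]
  · refine absurd ?_ (hτ ⟨i, hi⟩)
    rw [mem_permGraph, Equiv.Perm.mul_apply,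
      Equiv.Perm.ofSubtype_apply_of_mem (p := (· ∉ S.image Prod.fst)) τ hi] at hτij
    rw [mem_permGraph] at hσij
    rw [Equiv.Perm.mul_apply, Equiv.Perm.eq_inv_iff_eq, hτij, hσij]

end PermGraph

section PartialPerms

variable {α : Type*} [Fintype α] [DecidableEq α] {t : ℕ}

/-- The partial permutations of `α` with `t` elements, encoded as the `t`-sets of pairs contained in
the graph of some permutation. -/
def partialPerms (α : Type*) [Fintype α] [DecidableEq α] (t : ℕ) : Finset (Finset (α × α)) :=
  {S ∈ powersetCard t univ | (permStar S).Nonempty}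

theorem mem_partialPerms {S : Finset (α × α)} :
    S ∈ partialPerms α t ↔ #S = t ∧ (permStar S).Nonempty := by
  simp [partialPerms, mem_powersetCard]

theorem card_permStar_of_mem_partialPerms {S : Finset (α × α)} (hS : S ∈ partialPerms α t) :
    #(permStar S) = (Fintype.card α - t)! := by
  obtain ⟨rfl, hne⟩ := mem_partialPerms.1 hS
  exact card_permStar hne

-- Double counting of the pairs `(S, σ)` with `S ⊆ permGraph σ`.
theorem card_partialPerms (ht : t ≤ Fintype.card α) :
    #(partialPerms α t) = (Fintype.card α).choose t ^ 2 * t ! := by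
  have hpairs := sum_choose_card_eq_sum_card_containing (V := permGraph (α := α)) univ t
  simp only [card_permGraph, sum_const, card_univ, Fintype.card_perm, smul_eq_mul] at hpairs
  have hsum : ∑ S ∈ powersetCard t (univ : Finset (α × α)), #(containing permGraph univ S) =
      #(partialPerms α t) * (Fintype.card α - t)! := by
    rw [partialPerms, card_filter, sum_mul]
    refine sum_congr rfl fun S hS ↦ ?_
    split_ifs with hne
    · rw [one_mul, ← (mem_powersetCard.1 hS).2]
      exact card_permStar hne
    · rw [zero_mul, card_eq_zero]
      exact not_nonempty_iff_eq_empty.1 hne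
  refine Nat.eq_of_mul_eq_mul_right (Nat.factorial_pos (Fintype.card α - t)) ?_
  rw [← hsum, ← hpairs, ← Nat.choose_mul_factorial_mul_factorial ht]
  ring

/-- The trivial `t`-intersecting families of permutations: those whose members all extend one
partial permutation with `t` elements. -/
def starFamilies (α : Type*) [Fintype α] [DecidableEq α] (t : ℕ) :
    Finset (Finset (Equiv.Perm α)) :=
  (partialPerms α t).biUnion fun S ↦ (permStar S).powerset

theorem mem_starFamilies {F : Finset (Equiv.Perm α)} :
    F ∈ starFamilies α t ↔ ∃ S ∈ partialPerms α t, F ⊆ permStar S := by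
  simp [starFamilies]

theorem card_starFamilies_le :
    #(starFamilies α t) ≤ #(partialPerms α t) * 2 ^ (Fintype.card α - t)! := by
  refine card_biUnion_le_card_mul _ _ _ fun S hS ↦ ?_
  rw [card_powerset, card_permStar_of_mem_partialPerms hS]

theorem card_permStar_inter_le {S T : Finset (α × α)} (hS : S ∈ partialPerms α t)
    (hT : T ∈ partialPerms α t) (hST : S ≠ T) :
    #(permStar S ∩ permStar T) ≤ (Fintype.card α - (t + 1))! := by
  have hSt := (mem_partialPerms.1 hS).1
  have hTt := (mem_partialPerms.1 hT).1
  have hunion : #S < #(S ∪ T) := by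
    refine card_lt_card (subset_union_left.ssubset_of_ne fun h ↦ hST ?_)
    exact (eq_of_subset_of_card_le (union_eq_left.1 h.symm) (hSt.trans hTt.symm).le).symm
  rw [← permStar_union]
  exact (card_permStar_le _).trans (Nat.factorial_le (by omega))

theorem card_partialPerms_mul_le_card_starFamilies_add :
    #(partialPerms α t) * 2 ^ (Fintype.card α - t)! ≤
      #(starFamilies α t) + #(partialPerms α t) ^ 2 * 2 ^ (Fintype.card α - (t + 1))! := by
  calc #(partialPerms α t) * 2 ^ (Fintype.card α - t)!
      = ∑ S ∈ partialPerms α t, #(permStar S).powerset := by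
        rw [← smul_eq_mul, ← sum_const]
        refine sum_congr rfl fun S hS ↦ ?_
        rw [card_powerset, card_permStar_of_mem_partialPerms hS]
    _ ≤ _ := by
        refine sum_card_le_card_biUnion_add fun S hS T hT hST ↦ ?_
        have hinter : (permStar S).powerset ∩ (permStar T).powerset =
            (permStar S ∩ permStar T).powerset := by
          ext F
          simp only [mem_inter, mem_powerset, subset_inter_iff]
        rw [hinter, card_powerset]
        exact Nat.pow_le_pow_right two_pos (card_permStar_inter_le hS hT hST)

theorem isIntersectingFamily_of_mem_starFamilies {F : Finset (Equiv.Perm α)}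
    (hF : F ∈ starFamilies α t) : IsIntersectingFamily permGraph t F := by
  obtain ⟨S, hS, hFS⟩ := mem_starFamilies.1 hF
  intro σ hσ π hπ
  rw [← (mem_partialPerms.1 hS).1]
  exact card_le_card <|
    subset_inter (mem_permStar.1 (hFS hσ)) (mem_permStar.1 (hFS hπ))

end PartialPerms

section Stability

variable {α : Type*} [Fintype α] [DecidableEq α] {F : Finset (Equiv.Perm α)} {t : ℕ}

theorem containing_permGraph_subset_permStar (S : Finset (α × α)) :
    containing permGraph F S ⊆ permStar S :=
  containing_mono (subset_univ F)

-- At least a third of the permutations in `permStar T` agree with `σ` only inside `T`, hence in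
-- fewer than `t` points.
theorem IsIntersectingFamily.three_mul_card_containing_le
    (hF : IsIntersectingFamily permGraph t F) (ht : t + 2 ≤ Fintype.card α)
    {T : Finset (α × α)} (hT : #T = t) {σ : Equiv.Perm α} (hσ : σ ∈ F) (hTσ : ¬T ⊆ permGraph σ) :
    3 * #(containing permGraph F T) ≤ 2 * (Fintype.card α - t)! := by
  have hsub := containing_permGraph_subset_permStar (F := F) T
  obtain hempty | hne := (permStar T).eq_empty_or_nonempty
  · simp [subset_empty.1 (hempty ▸ hsub)]
  have havoid := factorial_le_three_mul_card_filter_inter_subset hne (by omega) σ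
  have hdisj : Disjoint (containing permGraph F T)
      {π ∈ permStar T | permGraph π ∩ permGraph σ ⊆ T} := by
    refine Finset.disjoint_left.2 fun π hπ hπT ↦ hTσ ?_
    rw [← eq_of_subset_of_card_le (mem_filter.1 hπT).2
      (hT.le.trans (hF π (containing_subset hπ) σ hσ))]
    exact inter_subset_right
  have htotal := card_le_card (union_subset hsub (filter_subset
    (fun π ↦ permGraph π ∩ permGraph σ ⊆ T) (permStar T)))
  rw [card_union_of_disjoint hdisj, card_permStar hne] at htotal
  rw [hT] at havoid htotal
  omega

theorem six_mul_card_filter_forall_spreadKernels_lt {q : ℕ} (hα : 0 < Fintype.card α)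
    (hsparse : ∀ s ≤ q, q < s + 3 → 6 * ((Fintype.card α - s)! : ℝ) *
      (20 * Fintype.card α / 21) ^ s < (Fintype.card α - t)!) :
    6 * #{σ ∈ F | ∀ S ∈ spreadKernels permGraph (Fintype.card α) q F, ¬S ⊆ permGraph σ} <
      (Fintype.card α - t)! := by
  have : (0 : ℝ) < Fintype.card α := mod_cast hα
  have hlt := card_filter_forall_spreadKernels_not_subset_lt (V := permGraph) (q := q) (F := F)
    hα (m := (Fintype.card α - t)! / 6) (by positivity) fun S hS hSq ↦ by
      calc (#(containing permGraph F S) : ℝ) ≤ (Fintype.card α - #S)! :=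
            mod_cast (card_le_card (containing_permGraph_subset_permStar S)).trans
              (card_permStar_le S)
        _ = (21 / (20 * Fintype.card α)) ^ #S *
            (6 * (Fintype.card α - #S)! * (20 * Fintype.card α / 21) ^ #S / 6) := by
            rw [← inv_div (20 * (Fintype.card α : ℝ)) 21, inv_pow]
            field_simp
        _ < _ := by gcongr; exact hsparse #S hS hSq
  rw [lt_div_iff₀ (by norm_num), mul_comm] at hlt
  exact_mod_cast hlt

theorem mul_factorial_sub_add_one_le {n t N : ℕ} (ht : t < n) (hN : N ≤ n - t) :
    N * (n - (t + 1))! ≤ (n - t)! := by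
  rw [show n - t = n - (t + 1) + 1 by omega, Nat.factorial_succ]
  exact Nat.mul_le_mul_right _ (by omega)

theorem card_biUnion_containing_permGraph_le {𝒯 : Finset (Finset (α × α))}
    (h𝒯 : ∀ T ∈ 𝒯, #T = t) :
    #(𝒯.biUnion (containing permGraph F)) ≤ #𝒯 * (Fintype.card α - t)! := by
  refine card_biUnion_le_card_mul _ _ _ fun T hT ↦ ?_
  rw [← h𝒯 T hT]
  exact (card_le_card (containing_permGraph_subset_permStar T)).trans (card_permStar_le T)

theorem exists_not_subset_permGraph_of_notMem_starFamilies (hstar : F ∉ starFamilies α t)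
    (hne : F.Nonempty) {T : Finset (α × α)} (hT : #T = t) : ∃ σ ∈ F, ¬T ⊆ permGraph σ := by
  obtain ⟨σ₀, hσ₀⟩ := hne
  by_contra! h
  exact hstar <| mem_starFamilies.2 ⟨T, mem_partialPerms.2
    ⟨hT, σ₀, mem_permStar.2 (h σ₀ hσ₀)⟩, fun σ hσ ↦ mem_permStar.2 (h σ hσ)⟩

theorem IsIntersectingFamily.six_mul_card_le {q : ℕ} (hα : 100 ≤ Fintype.card α)
    (hq : 100 * q ≤ Fintype.card α) (ht : t + 2 ≤ Fintype.card α)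
    (hqt : 6 * q ^ (t + 1) ≤ Fintype.card α - t)
    (hsparse : ∀ s ≤ q, q < s + 3 → 6 * ((Fintype.card α - s)! : ℝ) *
      (20 * Fintype.card α / 21) ^ s < (Fintype.card α - t)!)
    (hF : IsIntersectingFamily permGraph t F) (hstar : F ∉ starFamilies α t) :
    6 * #F ≤ 5 * (Fintype.card α - t)! := by
  obtain rfl | hne := F.eq_empty_or_nonempty
  · simp
  set 𝒮 := spreadKernels permGraph (Fintype.card α) q F
  have hH : 6 * #{σ ∈ F | ∀ S ∈ 𝒮, ¬S ⊆ permGraph σ} < (Fintype.card α - t)! :=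
    six_mul_card_filter_forall_spreadKernels_lt (by omega) hsparse
  have hcover {𝒯 : Finset (Finset (α × α))} (h𝒯 : ∀ S ∈ 𝒮, ∃ T ∈ 𝒯, T ⊆ S) :
      #F ≤ #{σ ∈ F | ∀ S ∈ 𝒮, ¬S ⊆ permGraph σ} + #(𝒯.biUnion (containing permGraph F)) := by
    convert card_le_card_filter_add_card_biUnion_containing h𝒯
  by_cases hcommon : ∃ T : Finset (α × α), #T = t ∧ ∀ S ∈ 𝒮, T ⊆ S
  · obtain ⟨T, hT, hTS⟩ := hcommon
    obtain ⟨σ, hσ, hTσ⟩ := exists_not_subset_permGraph_of_notMem_starFamilies hstar hne hT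
    have hFT := hF.three_mul_card_containing_le ht hT hσ hTσ
    have hsplit := hcover fun S hS ↦ ⟨T, mem_singleton_self T, hTS S hS⟩
    rw [singleton_biUnion] at hsplit
    omega
  · push Not at hcommon
    obtain ⟨𝒯, h𝒯, h𝒯t, h𝒯𝒮⟩ := exists_cover_card_eq_add_one
      (fun S hS ↦ (mem_spreadKernels.1 hS).1)
      (fun S hS T hT ↦ hF.le_card_inter_of_mem_spreadKernels hα hq
        (by rw [Fintype.card_prod, sq]) card_permGraph hS hT) hcommon
    have hsplit := hcover h𝒯𝒮
    have hbound : #(𝒯.biUnion (containing permGraph F)) ≤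
        q ^ (t + 1) * (Fintype.card α - (t + 1))! :=
      (card_biUnion_containing_permGraph_le h𝒯t).trans (Nat.mul_le_mul_right _ h𝒯)
    have hfact := mul_factorial_sub_add_one_le (by omega) hqt
    rw [mul_assoc] at hfact
    omega

end Stability

section Asymptotics

open Filter

-- Bernoulli's inequality: `(1 - s / n) ^ s ≥ 1 - s ^ 2 / n ≥ 1 / 2`.
theorem pow_le_two_mul_descFactorial {n s : ℕ} (hs : 2 * s ^ 2 ≤ n) :
    n ^ s ≤ 2 * n.descFactorial s := by
  obtain rfl | hn := n.eq_zero_or_pos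
  · simp [show s = 0 by simpa using hs]
  have hsn : s ≤ n := by nlinarith
  have hn' : (0 : ℝ) < n := mod_cast hn
  have hbernoulli : 1 + (s : ℝ) * (-(s / n)) ≤ (1 + -(s / n : ℝ)) ^ s := by
    refine one_add_mul_le_pow ?_ s
    linarith [(div_le_one hn').2 (mod_cast hsn : (s : ℝ) ≤ n)]
  have hhalf : (s : ℝ) * (s / n) ≤ 1 / 2 := by
    have hs' : 2 * (s : ℝ) ^ 2 ≤ n := mod_cast hs
    rw [← mul_div_assoc, div_le_iff₀ hn']
    linarith
  have hsub : n ^ s * (1 + -(s / n : ℝ)) ^ s ≤ n.descFactorial s := by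
    rw [← mul_pow, show (n : ℝ) * (1 + -(s / n)) = (n - s : ℕ) by
      rw [Nat.cast_sub hsn]; field_simp; ring]
    exact mod_cast (Nat.pow_le_pow_left (by omega) s).trans (Nat.pow_sub_le_descFactorial n s)
  have hpow : (n : ℝ) ^ s * (1 / 2) ≤ n ^ s * (1 + -(s / n : ℝ)) ^ s := by
    gcongr
    linarith
  have : (n : ℝ) ^ s ≤ 2 * n.descFactorial s := by linarith
  exact_mod_cast this

theorem six_mul_factorial_mul_pow_lt {n s t : ℕ} (hs : 2 * s ^ 2 ≤ n) (ht : t ≤ n)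
    (h : 12 * (n : ℝ) ^ t * (20 / 21) ^ s < 1) :
    6 * ((n - s)! : ℝ) * (20 * n / 21) ^ s < (n - t)! := by
  have hpow : (n : ℝ) ^ s ≤ 2 * n.descFactorial s := mod_cast pow_le_two_mul_descFactorial hs
  have hs_fact : ((n - s)! : ℝ) * n.descFactorial s = n ! :=
    mod_cast Nat.factorial_mul_descFactorial (by nlinarith)
  have ht_fact : (n ! : ℝ) ≤ (n - t)! * n ^ t := by
    rw [← Nat.factorial_mul_descFactorial ht]
    exact mod_cast Nat.mul_le_mul_left _ (Nat.descFactorial_le_pow n t)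
  calc 6 * ((n - s)! : ℝ) * (20 * n / 21) ^ s
      = 6 * (n - s)! * (20 / 21) ^ s * n ^ s := by rw [mul_div_right_comm, mul_pow]; ring
    _ ≤ 6 * (n - s)! * (20 / 21) ^ s * (2 * n.descFactorial s) := by gcongr
    _ = 12 * (20 / 21) ^ s * n ! := by rw [← hs_fact]; ring
    _ ≤ 12 * (20 / 21) ^ s * ((n - t)! * n ^ t) := by gcongr
    _ = 12 * n ^ t * (20 / 21) ^ s * (n - t)! := by ring
    _ < 1 * (n - t)! := by gcongr
    _ = (n - t)! := one_mul _

theorem eventually_mul_add_pow_mul_pow_lt_one (a b k : ℕ) {r : ℝ} (hr₀ : 0 < r) (hr₁ : r < 1) :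
    ∀ᶠ s : ℕ in atTop, a * ((s + b : ℕ) : ℝ) ^ k * r ^ s < 1 := by
  have hlim : Tendsto (fun s : ℕ ↦ (a / r ^ b : ℝ) * (((s + b : ℕ) : ℝ) ^ k * r ^ (s + b)))
      atTop (nhds 0) := by
    simpa using ((tendsto_pow_const_mul_const_pow_of_abs_lt_one k
      (abs_lt.2 ⟨by linarith, hr₁⟩)).comp (tendsto_add_atTop_nat b)).const_mul (a / r ^ b)
  filter_upwards [hlim.eventually_lt_const one_pos] with s hs
  calc a * ((s + b : ℕ) : ℝ) ^ k * r ^ s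
      = a / r ^ b * (((s + b : ℕ) : ℝ) ^ k * r ^ (s + b)) := by rw [pow_add]; field_simp
    _ < 1 := hs

-- Take `q ≈ (n / 200) ^ (1 / (t + 2))`.
theorem eventually_exists_stability_parameter (t : ℕ) : ∀ᶠ n : ℕ in atTop, ∃ q : ℕ,
    100 * q ≤ n ∧ 6 * q ^ (t + 1) ≤ n - t ∧ ∀ s ≤ q, q < s + 3 →
      6 * ((n - s)! : ℝ) * (20 * n / 21) ^ s < (n - t)! := by
  obtain ⟨s₀, hs₀⟩ := eventually_atTop.1 <| eventually_mul_add_pow_mul_pow_lt_one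
    (12 * 200 ^ t) 3 ((t + 2) * t) (r := 20 / 21) (by norm_num) (by norm_num)
  filter_upwards [eventually_ge_atTop (200 * (s₀ + 3) ^ (t + 2)), eventually_ge_atTop (2 * t)]
    with n hn ht
  set q := Nat.nthRoot (t + 2) (n / 200)
  have hq_le : q ^ (t + 2) ≤ n / 200 := Nat.pow_nthRoot_le (.inl (by omega))
  have hlt_q : n / 200 < (q + 1) ^ (t + 2) := Nat.lt_pow_nthRoot_add_one (by omega) _
  have hsq : s₀ + 3 ≤ q := (Nat.le_nthRoot_iff (by omega)).2 (by omega)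
  have hq_pow {k : ℕ} (hk : k ≤ t + 2) : q ^ k ≤ q ^ (t + 2) := Nat.pow_le_pow_right (by omega) hk
  have hq_one : q ≤ q ^ (t + 2) := Nat.le_self_pow (by omega) q
  have hq_two := hq_pow (show 2 ≤ t + 2 by omega)
  have hq_succ := hq_pow (show t + 1 ≤ t + 2 by omega)
  refine ⟨q, by omega, by omega, fun s hs hqs ↦ ?_⟩
  have hs_two : s ^ 2 ≤ q ^ 2 := Nat.pow_le_pow_left hs 2
  refine six_mul_factorial_mul_pow_lt (by omega) (by omega) ?_
  have hns : n ≤ 200 * (s + 3) ^ (t + 2) := by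
    have : (q + 1) ^ (t + 2) ≤ (s + 3) ^ (t + 2) := Nat.pow_le_pow_left (by omega) _
    omega
  calc 12 * (n : ℝ) ^ t * (20 / 21) ^ s
      ≤ 12 * ((200 * (s + 3) ^ (t + 2) : ℕ) : ℝ) ^ t * (20 / 21) ^ s := by gcongr
    _ = (12 * 200 ^ t : ℕ) * ((s + 3 : ℕ) : ℝ) ^ ((t + 2) * t) * (20 / 21) ^ s := by
      push_cast
      rw [mul_pow, pow_mul]
      ring
    _ < 1 := hs₀ s (by omega)

theorem eventually_six_mul_card_le (t : ℕ) : ∀ᶠ n : ℕ in atTop,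
    ∀ F : Finset (Equiv.Perm (Fin n)), IsIntersectingFamily permGraph t F →
      F ∉ starFamilies (Fin n) t → 6 * #F ≤ 5 * (n - t)! := by
  filter_upwards [eventually_exists_stability_parameter t, eventually_ge_atTop (t + 100)]
    with n ⟨q, hq, hqt, hsparse⟩ hn F hF hstar
  have h := hF.six_mul_card_le (q := q)
  simp only [Fintype.card_fin] at h
  exact h (by omega) hq (by omega) hqt hsparse hstar

end Asymptotics

section Families

variable {n t : ℕ} {F : Finset (Equiv.Perm (Fin n))}

theorem isTIntersecting_iff : IsTIntersecting t F ↔ IsIntersectingFamily permGraph t F := by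
  simp only [IsTIntersecting, IsIntersectingFamily, agreements, card_permGraph_inter]

theorem isTrivial_iff (ht : t ≤ n) : IsTrivial t F ↔ F ∈ starFamilies (Fin n) t := by
  rw [mem_starFamilies]
  constructor
  · rintro ⟨I, rfl, x, hx⟩
    obtain rfl | ⟨σ₀, hσ₀⟩ := F.eq_empty_or_nonempty
    · obtain ⟨S, hS⟩ : (partialPerms (Fin n) #I).Nonempty := by
        rw [← card_pos, card_partialPerms (by simpa using ht), Fintype.card_fin]
        have := Nat.choose_pos ht
        positivity
      exact ⟨S, hS, empty_subset _⟩
    have hsub : F ⊆ permStar (I.image fun i ↦ (i, x i)) := fun σ hσ ↦ by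
      simpa [mem_permStar, image_subset_iff, mem_permGraph] using hx σ hσ
    refine ⟨_, mem_partialPerms.2 ⟨card_image_of_injective I ?_, σ₀, hsub hσ₀⟩, hsub⟩
    exact fun i j hij ↦ congrArg Prod.fst hij
  · rintro ⟨S, hS, hFS⟩
    obtain ⟨rfl, σ, hσ⟩ := mem_partialPerms.1 hS
    exact ⟨S.image Prod.fst, card_image_fst_of_subset_permGraph (mem_permStar.1 hσ), σ,
      fun π hπ ↦ (mem_permStar_iff_forall (mem_permStar.1 hσ)).1 (hFS hπ)⟩

theorem card_isTIntersecting_and_isTrivial (ht : t ≤ n) :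
    Nat.card {F : Finset (Equiv.Perm (Fin n)) // IsTIntersecting t F ∧ IsTrivial t F} =
      #(starFamilies (Fin n) t) := by
  refine Nat.subtype_card _ fun F ↦ ?_
  rw [isTIntersecting_iff, isTrivial_iff ht]
  exact ⟨fun h ↦ ⟨isIntersectingFamily_of_mem_starFamilies h, h⟩, And.right⟩

/-- The nontrivial `t`-intersecting families of permutations of `Fin n`. -/
noncomputable def nontrivialFamilies (n t : ℕ) : Finset (Finset (Equiv.Perm (Fin n))) :=
  open Classical in {F | IsIntersectingFamily permGraph t F ∧ F ∉ starFamilies (Fin n) t}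

theorem mem_nontrivialFamilies :
    F ∈ nontrivialFamilies n t ↔
      IsIntersectingFamily permGraph t F ∧ F ∉ starFamilies (Fin n) t := by
  simp [nontrivialFamilies]

theorem card_isTIntersecting (n t : ℕ) :
    Nat.card {F : Finset (Equiv.Perm (Fin n)) // IsTIntersecting t F} =
      #(starFamilies (Fin n) t) + #(nontrivialFamilies n t) := by
  classical
  rw [← card_union_of_disjoint
    (Finset.disjoint_right.2 fun F hF ↦ (mem_nontrivialFamilies.1 hF).2)]
  refine Nat.subtype_card _ fun F ↦ ?_
  rw [mem_union, mem_nontrivialFamilies, isTIntersecting_iff]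
  have := isIntersectingFamily_of_mem_starFamilies (F := F) (t := t)
  tauto

theorem card_nontrivialFamilies_le {K : ℕ} (ht : t ≤ n)
    (hK : ∀ F : Finset (Equiv.Perm (Fin n)), IsIntersectingFamily permGraph t F →
      F ∉ starFamilies (Fin n) t → #F ≤ K) :
    #(nontrivialFamilies n t) ≤ (n ! + 1) ^ 4 ^ n * 2 ^ K := by
  have hcard (σ : Equiv.Perm (Fin n)) : #(permGraph σ) = n := by rw [card_permGraph]; simp
  have h := card_le_of_forall_exists_compatible_eq (V := permGraph (α := Fin n)) (k := n) (K := K)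
    (𝓐 := nontrivialFamilies n t) (t := t) (fun σ ↦ (hcard σ).le) fun F hF ↦ by
      obtain ⟨hF_int, hF_star⟩ := mem_nontrivialFamilies.1 hF
      obtain ⟨M, hFM, hM, hM_closed⟩ :=
        hF_int.exists_superset_compatible_eq fun σ ↦ ht.trans (hcard σ).ge
      refine ⟨M, hFM, hM_closed, hK M hM fun hM_star ↦ hF_star ?_⟩
      obtain ⟨S, hS, hMS⟩ := mem_starFamilies.1 hM_star
      exact mem_starFamilies.2 ⟨S, hS, hFM.trans hMS⟩
  simpa [Fintype.card_perm] using h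

theorem factorial_add_one_pow_le {n : ℕ} (hn : n ≠ 0) : (n ! + 1) ^ 4 ^ n ≤ 2 ^ 16 ^ n := by
  have hfact : n ! + 1 ≤ 2 ^ (n * n) := by
    rw [pow_mul]
    exact (Nat.factorial_le_pow n).trans_lt (Nat.pow_lt_pow_left Nat.lt_two_pow_self hn)
  have hexp : n * n * 4 ^ n ≤ 16 ^ n := by
    calc n * n * 4 ^ n ≤ 2 ^ n * 2 ^ n * 4 ^ n := by gcongr <;> exact Nat.lt_two_pow_self.le
      _ = 16 ^ n := by rw [← mul_pow, ← mul_pow]; norm_num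
  calc (n ! + 1) ^ 4 ^ n ≤ (2 ^ (n * n)) ^ 4 ^ n := Nat.pow_le_pow_left hfact _
    _ = 2 ^ (n * n * 4 ^ n) := (pow_mul ..).symm
    _ ≤ 2 ^ 16 ^ n := Nat.pow_le_pow_right two_pos hexp

theorem card_partialPerms_le (ht : t ≤ n) : #(partialPerms (Fin n) t) ≤ 2 ^ (n * (t + 1)) := by
  rw [card_partialPerms (by simpa using ht), Fintype.card_fin]
  calc n.choose t ^ 2 * t ! = n.choose t * n.descFactorial t := by
        rw [Nat.descFactorial_eq_factorial_mul_choose]; ring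
    _ ≤ 2 ^ n * (2 ^ n) ^ t := Nat.mul_le_mul (Nat.choose_le_two_pow n t) <|
        (Nat.descFactorial_le_pow n t).trans (Nat.pow_le_pow_left Nat.lt_two_pow_self.le t)
    _ = 2 ^ (n * (t + 1)) := by ring

end Families

section Counting

open Filter

variable {n t : ℕ}

theorem eventually_card_nontrivialFamilies_mul_le (t : ℕ) : ∀ᶠ n : ℕ in atTop,
    #(nontrivialFamilies n t) * 2 ^ n ≤ 2 ^ (n - t)! := by
  filter_upwards [eventually_six_mul_card_le t, Nat.eventually_mul_pow_lt_factorial_sub 12 16 t,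
    eventually_ge_atTop t, eventually_ne_atTop 0] with n hstab hfact ht hn
  have hcard : #(nontrivialFamilies n t) ≤ (n ! + 1) ^ 4 ^ n * 2 ^ (5 * (n - t)! / 6) :=
    card_nontrivialFamilies_le ht fun F hF hstar ↦ by have := hstab F hF hstar; omega
  have hn_lt : n < 16 ^ n := Nat.lt_pow_self (by norm_num)
  calc #(nontrivialFamilies n t) * 2 ^ n
      ≤ 2 ^ 16 ^ n * 2 ^ (5 * (n - t)! / 6) * 2 ^ n := by
        gcongr
        exact hcard.trans (Nat.mul_le_mul_right _ (factorial_add_one_pow_le hn))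
    _ = 2 ^ (16 ^ n + 5 * (n - t)! / 6 + n) := by rw [← pow_add, ← pow_add]
    _ ≤ 2 ^ (n - t)! := Nat.pow_le_pow_right two_pos (by omega)

theorem eventually_card_partialPerms_mul_le (t : ℕ) : ∀ᶠ n : ℕ in atTop,
    #(partialPerms (Fin n) t) * 2 ^ (n - (t + 1))! * 2 ^ n ≤ 2 ^ (n - t)! := by
  filter_upwards [Nat.eventually_mul_pow_lt_factorial_sub (2 * (t + 2)) 2 t,
    eventually_ge_atTop (t + 2)] with n hfact hn
  have hn_le : 2 * (n * (t + 1) + n) ≤ 2 * (t + 2) * 2 ^ n := by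
    calc 2 * (n * (t + 1) + n) = 2 * (t + 2) * n := by ring
      _ ≤ 2 * (t + 2) * 2 ^ n := Nat.mul_le_mul_left _ Nat.lt_two_pow_self.le
  have hfact_succ : 2 * (n - (t + 1))! ≤ (n - t)! :=
    mul_factorial_sub_add_one_le (by omega) (by omega)
  calc #(partialPerms (Fin n) t) * 2 ^ (n - (t + 1))! * 2 ^ n
      ≤ 2 ^ (n * (t + 1)) * 2 ^ (n - (t + 1))! * 2 ^ n := by
        gcongr
        exact card_partialPerms_le (by omega)
    _ = 2 ^ (n * (t + 1) + (n - (t + 1))! + n) := by rw [← pow_add, ← pow_add]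
    _ ≤ 2 ^ (n - t)! := Nat.pow_le_pow_right two_pos (by omega)

/-- The number of pairs consisting of a `t`-element partial permutation `S` and a subfamily of
`permStar S`, to which both counts of families are asymptotic. -/
noncomputable def starPairCount (t n : ℕ) : ℝ :=
  (n.choose t : ℝ) ^ 2 * (t ! : ℝ) * 2 ^ (n - t)!

theorem starPairCount_eq (ht : t ≤ n) :
    starPairCount t n = #(partialPerms (Fin n) t) * 2 ^ (n - t)! := by
  rw [starPairCount, card_partialPerms (by simpa using ht)]
  simp

theorem starPairCount_pos (ht : t ≤ n) : 0 < starPairCount t n := by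
  have : 0 < n.choose t := Nat.choose_pos ht
  rw [starPairCount]
  positivity

theorem two_pow_le_starPairCount (ht : t ≤ n) : 2 ^ (n - t)! ≤ starPairCount t n := by
  have : 0 < n.choose t ^ 2 * t ! := Nat.mul_pos (pow_pos (Nat.choose_pos ht) 2) t.factorial_pos
  exact le_mul_of_one_le_left (by positivity) (mod_cast this)

theorem tendsto_half_pow : Tendsto (fun n : ℕ ↦ (1 / 2 : ℝ) ^ n) atTop (nhds 0) :=
  tendsto_pow_atTop_nhds_zero_of_lt_one (by norm_num) (by norm_num)

theorem tendsto_card_starFamilies_div (t : ℕ) :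
    Tendsto (fun n : ℕ ↦ (#(starFamilies (Fin n) t) : ℝ) / starPairCount t n) atTop (nhds 1) := by
  have hlower : Tendsto (fun n : ℕ ↦ 1 - (1 / 2 : ℝ) ^ n) atTop (nhds 1) := by
    simpa using tendsto_half_pow.const_sub 1
  refine tendsto_of_tendsto_of_tendsto_of_le_of_le' hlower tendsto_const_nhds ?_ ?_
  · filter_upwards [eventually_card_partialPerms_mul_le t, eventually_ge_atTop t] with n hoverlap ht
    have hcount := card_partialPerms_mul_le_card_starFamilies_add (α := Fin n) (t := t)
    rw [Fintype.card_fin] at hcount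
    set N := #(partialPerms (Fin n) t)
    have hsmall : (N : ℝ) * 2 ^ (n - (t + 1))! ≤ 2 ^ (n - t)! * (1 / 2) ^ n := by
      rw [one_div, inv_pow, ← div_eq_mul_inv, le_div_iff₀ (by positivity)]
      exact_mod_cast hoverlap
    rw [le_div_iff₀ (starPairCount_pos ht), starPairCount_eq ht]
    calc (1 - (1 / 2 : ℝ) ^ n) * (N * 2 ^ (n - t)!)
        = N * 2 ^ (n - t)! - N * (2 ^ (n - t)! * (1 / 2) ^ n) := by ring
      _ ≤ N * 2 ^ (n - t)! - N * (N * 2 ^ (n - (t + 1))!) := by gcongr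
      _ = N * 2 ^ (n - t)! - N ^ 2 * 2 ^ (n - (t + 1))! := by ring
      _ ≤ #(starFamilies (Fin n) t) := sub_le_iff_le_add.2 (mod_cast hcount)
  · filter_upwards [eventually_ge_atTop t] with n ht
    rw [div_le_one (starPairCount_pos ht), starPairCount_eq ht]
    exact_mod_cast Fintype.card_fin n ▸ card_starFamilies_le (α := Fin n) (t := t)

theorem tendsto_card_nontrivialFamilies_div (t : ℕ) :
    Tendsto (fun n : ℕ ↦ (#(nontrivialFamilies n t) : ℝ) / starPairCount t n) atTop (nhds 0) := by
  refine squeeze_zero' ?_ ?_ tendsto_half_pow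
  · filter_upwards [eventually_ge_atTop t] with n ht
    exact div_nonneg (Nat.cast_nonneg _) (starPairCount_pos ht).le
  · filter_upwards [eventually_card_nontrivialFamilies_mul_le t, eventually_ge_atTop t]
      with n hcard ht
    rw [div_le_iff₀ (starPairCount_pos ht), one_div, inv_pow, inv_mul_eq_div,
      le_div_iff₀ (by positivity)]
    exact le_trans (mod_cast hcard) (two_pow_le_starPairCount ht)

theorem tendsto_card_isTIntersecting_div (t : ℕ) :
    Tendsto (fun n : ℕ ↦
      (Nat.card {F : Finset (Equiv.Perm (Fin n)) // IsTIntersecting t F} : ℝ) / starPairCount t n)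
      atTop (nhds 1) := by
  simpa [card_isTIntersecting, add_div] using
    (tendsto_card_starFamilies_div t).add (tendsto_card_nontrivialFamilies_div t)

theorem tendsto_card_isTIntersecting_and_isTrivial_div (t : ℕ) :
    Tendsto (fun n : ℕ ↦
      (Nat.card {F : Finset (Equiv.Perm (Fin n)) // IsTIntersecting t F ∧ IsTrivial t F} : ℝ) /
        starPairCount t n) atTop (nhds 1) := by
  refine (tendsto_card_starFamilies_div t).congr' ?_
  filter_upwards [eventually_ge_atTop t] with n ht
  rw [card_isTIntersecting_and_isTrivial ht]

end Counting

end IntersectingPermutations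

theorem typical_structure_of_t_intersecting_permutation_families
    (t : ℕ) (ht : 1 ≤ t) :
    Filter.Tendsto (fun n : ℕ =>
        (Nat.card {F : Finset (Equiv.Perm (Fin n)) //
            IsTIntersecting t F ∧ IsTrivial t F} : ℝ) /
        (Nat.card {F : Finset (Equiv.Perm (Fin n)) // IsTIntersecting t F} : ℝ))
      Filter.atTop (nhds 1)
    ∧
    Filter.Tendsto (fun n : ℕ =>
        (Nat.card {F : Finset (Equiv.Perm (Fin n)) // IsTIntersecting t F} : ℝ) /
        ((n.choose t : ℝ) ^ 2 * (t.factorial : ℝ) * (2 : ℝ) ^ ((n - t).factorial)))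
      Filter.atTop (nhds 1) := by
  have htotal := IntersectingPermutations.tendsto_card_isTIntersecting_div t
  have htrivial := IntersectingPermutations.tendsto_card_isTIntersecting_and_isTrivial_div t
  refine ⟨?_, htotal⟩
  have hratio := htrivial.div htotal one_ne_zero
  rw [div_one] at hratio
  refine hratio.congr' ?_
  filter_upwards [Filter.eventually_ge_atTop t] with n hn
  exact div_div_div_cancel_right₀ (IntersectingPermutations.starPairCount_pos hn).ne' _ _
end

section
/- For every fixed integer t ≥ 1 and every ε > 0 there exists n₀ such that for all n ≥ n₀ and every integer m with n·2^{2n−2t+2}·log n ≤ m ≤ (n−t)!, the number of non-trivial t-intersecting families of exactly m permutations in S_n is at most ε times the total number of t-intersecting families of exactly m permutations in S_n. -/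
open Finset
open scoped Nat

/-!
A maximal `t`-intersecting family `H` consists of all permutations having at least `t` agreements
with each member of `H`. The same holds with `H` replaced by a smallest family `G` that determines
`H` in this way. By minimality, each `g ∈ G` has a permutation with fewer than `t` agreements with
`g` and at least `t` with all other members of `G`, so the random-order proof of Bollobás's
set-pair inequality, applied to the graphs of these permutations, gives `#G ≤ t * n.centralBinom`.
Hence there are at most `(n! + 1) ^ (t * n.centralBinom)` maximal families.

By spread approximation, up to a negligible remainder a `t`-intersecting family either fixes `t`
values or is negligible itself. If it fixes `t` values but is not trivial, then it misses a
positive proportion of the permutations with these values, namely those deranged with respect to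
a member without them. So a non-trivial family has at most `3/4 * (n - t)!` members, and a maximal
non-trivial family has at most `(3/4) ^ m * (n - t)!.choose m` subfamilies of size `m`, whereas the
permutations fixing `t` points already yield `(n - t)!.choose m`. For the sizes `m` in question the
factor `(3/4) ^ m` outweighs the number of maximal families.
-/

section SetPairs

variable {α : Type*} [DecidableEq α]

lemma exists_subset_card_eq_forall_lt {β : Type*} [LinearOrder β] {x : α → β}
    (hx : Function.Injective x) {C : Finset α} {k : ℕ} (hk : k ≤ #C) :
    ∃ T ⊆ C, #T = k ∧ ∀ a ∈ T, ∀ b ∈ C \ T, x a < x b := by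
  induction k with
  | zero => exact ⟨∅, by simp⟩
  | succ k ih =>
    obtain ⟨T, hTC, hT, hlt⟩ := ih (by omega)
    have hne : (C \ T).Nonempty := by
      rw [← card_pos, card_sdiff_of_subset hTC]; omega
    obtain ⟨b, hb, hmin⟩ := exists_min_image (C \ T) x hne
    obtain ⟨hbC, hbT⟩ := mem_sdiff.1 hb
    refine ⟨insert b T, insert_subset hbC hTC, by rw [card_insert_of_notMem hbT, hT], ?_⟩
    intro a ha c hc
    simp only [mem_sdiff, mem_insert, not_or] at hc
    have hcT : c ∈ C \ T := mem_sdiff.2 ⟨hc.1, hc.2.2⟩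
    rcases mem_insert.1 ha with rfl | ha
    · exact (hmin c hcT).lt_of_ne fun h ↦ hc.2.1 (hx h).symm
    · exact hlt a ha c hcT

lemma card_filter_inter_lt_card_filter_inter {x : α → ℕ} {A B A' B' : Finset α} {t p p' : ℕ}
    (hA : ∀ a ∈ A \ B, x a < p) (hB' : ∀ b ∈ B' \ A', p' ≤ x b) (hp : p ≤ p')
    (hAB : #(A ∩ B) < t) (hAB' : t ≤ #(A ∩ B')) :
    #{e ∈ A ∩ B | x e < p} < #{e ∈ A' ∩ B' | x e < p'} := by
  have hsub : A ∩ B' ⊆ {e ∈ A' ∩ B' | x e < p'} ∪ {e ∈ A ∩ B | ¬ x e < p} := by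
    intro e he
    have hA := hA e
    have hB' := hB' e
    simp only [mem_union, mem_filter, mem_inter, mem_sdiff] at *
    grind
  have hle := (card_le_card hsub).trans (card_union_le _ _)
  have hsplit := card_filter_add_card_filter_not (s := A ∩ B) (fun e ↦ x e < p)
  omega

lemma card_le_of_forall_lt {ι : Type*} {s : Finset ι} {A B : ι → Finset α} {t : ℕ}
    (hd : ∀ i ∈ s, #(A i ∩ B i) < t) (ho : ∀ i ∈ s, ∀ j ∈ s, i ≠ j → t ≤ #(A i ∩ B j))
    {x : α → ℕ} (hx : ∀ i ∈ s, ∀ a ∈ A i \ B i, ∀ b ∈ B i \ A i, x a < x b) : #s ≤ t := by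
  let p : ι → ℕ := fun i ↦ (A i \ B i).sup fun a ↦ x a + 1
  have hpA : ∀ i, ∀ a ∈ A i \ B i, x a < p i := fun i a ha ↦
    le_sup (f := fun a ↦ x a + 1) ha
  have hpB : ∀ i ∈ s, ∀ b ∈ B i \ A i, p i ≤ x b := fun i hi b hb ↦
    Finset.sup_le fun a ha ↦ hx i hi a ha b hb
  let rank : ι → ℕ := fun i ↦ #{e ∈ A i ∩ B i | x e < p i}
  have rank_lt : ∀ i ∈ s, ∀ j ∈ s, i ≠ j → p i ≤ p j → rank i < rank j :=
    fun i hi j hj hij hp ↦ card_filter_inter_lt_card_filter_inter (hpA i) (hpB j hj) hp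
      (hd i hi) (ho i hi j hj hij)
  rw [← card_range t]
  refine card_le_card_of_injOn rank (fun i hi ↦ ?_) fun i hi j hj hij ↦ ?_
  · exact mem_coe.2 <| mem_range.2 <| (card_filter_le _ _).trans_lt (hd i (mem_coe.1 hi))
  · by_contra hne
    rcases le_total (p i) (p j) with h | h
    · exact (rank_lt i hi j hj hne h).ne hij
    · exact (rank_lt j hj i hi (Ne.symm hne) h).ne' hij

lemma exists_perm_mapsTo_of_card_eq {C P T : Finset α} (hP : P ⊆ C) (hT : T ⊆ C)
    (h : #P = #T) :
    ∃ π : Equiv.Perm α, (∀ a ∈ P, π a ∈ T) ∧ ∀ a ∈ C \ P, π a ∈ C \ T := by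
  have hcard : Fintype.card {c : C // (c : α) ∈ P} = Fintype.card {c : C // (c : α) ∈ T} := by
    have hsub : ∀ {S}, S ⊆ C → Fintype.card {c : C // (c : α) ∈ S} = #S := fun {S} hS ↦ by
      rw [← Fintype.card_coe]
      exact Fintype.card_congr (Equiv.subtypeSubtypeEquivSubtype fun ha ↦ hS ha)
    rw [hsub hP, hsub hT, h]
  let τ : Equiv.Perm C := (Fintype.equivOfCardEq hcard).extendSubtype
  refine ⟨Equiv.Perm.ofSubtype τ, fun a ha ↦ ?_, fun a ha ↦ ?_⟩
  · rw [Equiv.Perm.ofSubtype_apply_of_mem τ (hP ha)]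
    exact Equiv.extendSubtype_mem (Fintype.equivOfCardEq hcard) ⟨a, hP ha⟩ ha
  · obtain ⟨haC, haP⟩ := mem_sdiff.1 ha
    rw [Equiv.Perm.ofSubtype_apply_of_mem τ haC]
    exact mem_sdiff.2 ⟨(τ ⟨a, haC⟩).2,
      Equiv.extendSubtype_not_mem (Fintype.equivOfCardEq hcard) ⟨a, haC⟩ haP⟩

section Numberings

variable [Fintype α]

/-- The numberings of `α` in which every element of `P` precedes every element of `Q`; the
sample space of the random-order proof of Bollobás's inequality. -/
def separatingNumberings (P Q : Finset α) : Finset (Numbering α) :=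
  {x | ∀ a ∈ P, ∀ b ∈ Q, x a < x b}

lemma mem_separatingNumberings {P Q : Finset α} {x : Numbering α} :
    x ∈ separatingNumberings P Q ↔ ∀ a ∈ P, ∀ b ∈ Q, x a < x b := by
  simp only [separatingNumberings, mem_filter_univ]

lemma card_separatingNumberings_sdiff_le {C P T : Finset α} (hP : P ⊆ C) (hT : T ⊆ C)
    (h : #P = #T) :
    #(separatingNumberings T (C \ T)) ≤ #(separatingNumberings P (C \ P)) := by
  obtain ⟨π, hπP, hπC⟩ := exists_perm_mapsTo_of_card_eq hP hT h
  refine card_le_card_of_injOn (fun x ↦ π.trans x) (fun x hx ↦ ?_) fun x _ y _ hxy ↦ ?_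
  · rw [mem_coe, mem_separatingNumberings] at hx ⊢
    exact fun a ha b hb ↦ hx _ (hπP a ha) _ (hπC b hb)
  · ext a
    have := DFunLike.congr_fun hxy (π.symm a)
    simpa using congrArg Fin.val this

lemma factorial_card_le_choose_mul_card_separatingNumberings {P Q : Finset α}
    (hPQ : Disjoint P Q) :
    (Fintype.card α)! ≤ (#P + #Q).choose #P * #(separatingNumberings P Q) := by
  have hPC : P ⊆ P ∪ Q := subset_union_left
  have hQ : (P ∪ Q) \ P = Q := union_sdiff_cancel_left hPQ
  have hcover : (univ : Finset (Numbering α)) ⊆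
      ((P ∪ Q).powersetCard #P).biUnion fun T ↦ separatingNumberings T ((P ∪ Q) \ T) := by
    intro x _
    obtain ⟨T, hT, hTcard, hlt⟩ :=
      exists_subset_card_eq_forall_lt x.injective (card_le_card hPC)
    exact mem_biUnion.2 ⟨T, mem_powersetCard.2 ⟨hT, hTcard⟩, mem_separatingNumberings.2 hlt⟩
  calc (Fintype.card α)! = #(univ : Finset (Numbering α)) := by simp
    _ ≤ #((P ∪ Q).powersetCard #P) * #(separatingNumberings P Q) := by
      refine (card_le_card hcover).trans (card_biUnion_le_card_mul _ _ _ fun T hT ↦ ?_)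
      obtain ⟨hT, hTcard⟩ := mem_powersetCard.1 hT
      simpa only [hQ] using card_separatingNumberings_sdiff_le hPC hT hTcard.symm
    _ = (#P + #Q).choose #P * #(separatingNumberings P Q) := by
      rw [card_powersetCard, card_union_of_disjoint hPQ]

end Numberings

-- Bollobás's set-pair inequality is the case `t = 1`.
theorem card_le_mul_choose_of_card_inter [Finite α] {ι : Type*} {s : Finset ι} {A B : ι → Finset α}
    {a b t : ℕ} (hA : ∀ i ∈ s, #(A i) ≤ a) (hB : ∀ i ∈ s, #(B i) ≤ b)
    (hd : ∀ i ∈ s, #(A i ∩ B i) < t) (ho : ∀ i ∈ s, ∀ j ∈ s, i ≠ j → t ≤ #(A i ∩ B j)) :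
    #s ≤ t * (a + b).choose a := by
  classical
  cases nonempty_fintype α
  let sep : ι → Finset (Numbering α) := fun i ↦ separatingNumberings (A i \ B i) (B i \ A i)
  have hprob : ∀ i ∈ s, (Fintype.card α)! ≤ (a + b).choose a * #(sep i) := fun i hi ↦ by
    have hP : #(A i \ B i) ≤ a := (card_le_card sdiff_subset).trans (hA i hi)
    have hQ : #(B i \ A i) ≤ b := (card_le_card sdiff_subset).trans (hB i hi)
    refine (factorial_card_le_choose_mul_card_separatingNumberings
      disjoint_sdiff_sdiff).trans (Nat.mul_le_mul_right _ ?_)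
    calc _ ≤ (#(A i \ B i) + b).choose #(A i \ B i) := Nat.choose_le_choose _ (by omega)
      _ = (#(A i \ B i) + b).choose b := Nat.choose_symm_add
      _ ≤ (a + b).choose b := Nat.choose_le_choose _ (by omega)
      _ = (a + b).choose a := Nat.choose_symm_add.symm
  have hpointwise : ∀ x : Numbering α, #{i ∈ s | x ∈ sep i} ≤ t := fun x ↦ by
    refine card_le_of_forall_lt (fun i hi ↦ hd i (mem_filter.1 hi).1)
      (fun i hi j hj ↦ ho i (mem_filter.1 hi).1 j (mem_filter.1 hj).1) (x := fun a ↦ x a) ?_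
    exact fun _ hi ↦ mem_separatingNumberings.1 (mem_filter.1 hi).2
  refine Nat.le_of_mul_le_mul_right ?_ (Nat.factorial_pos (Fintype.card α))
  calc #s * (Fintype.card α)! = ∑ _i ∈ s, (Fintype.card α)! := by simp
    _ ≤ ∑ i ∈ s, (a + b).choose a * #(sep i) := sum_le_sum hprob
    _ = (a + b).choose a * ∑ x : Numbering α, #{i ∈ s | x ∈ sep i} := by
      rw [← mul_sum]
      congr 1
      simpa [bipartiteAbove, bipartiteBelow] using
        sum_card_bipartiteAbove_eq_sum_card_bipartiteBelow (s := s) (t := univ)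
          (fun i x ↦ x ∈ sep i)
    _ ≤ (a + b).choose a * ∑ _x : Numbering α, t := by gcongr with x; exact hpointwise x
    _ = t * (a + b).choose a * (Fintype.card α)! := by simp; ring

end SetPairs

section Fragments

variable {α : Type*} [DecidableEq α]

/-- Talagrand's `p`-smallness: `H` has a cover, by the up-sets of the members of some `G`, whose
expected number of members inside a `p`-random set is less than `1 / 2`. -/
def IsPSmall (p : ℝ) (H : Finset (Finset α)) : Prop :=
  ∃ G : Finset (Finset α), (∀ S ∈ H, ∃ T ∈ G, T ⊆ S) ∧ ∑ T ∈ G, p ^ #T < 1 / 2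

/-- The minimum fragments of `H` with respect to `W`: the inclusion-minimal sets among the `S \ W`
with `S ∈ H`. -/
def minFragments (H : Finset (Finset α)) (W : Finset α) : Finset (Finset α) :=
  {T ∈ H.image (· \ W) | ∀ S ∈ H, S \ W ⊆ T → T ⊆ S \ W}

lemma mem_minFragments {H : Finset (Finset α)} {W T : Finset α} :
    T ∈ minFragments H W ↔ Minimal (· ∈ H.image (· \ W)) T := by
  simp [minFragments, Minimal]

lemma exists_mem_minFragments_subset {H : Finset (Finset α)} {S : Finset α} (hS : S ∈ H)
    (W : Finset α) : ∃ T ∈ minFragments H W, T ⊆ S := by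
  obtain ⟨T, hTS, hT⟩ := exists_le_minimal _ (mem_image_of_mem (· \ W) hS)
  exact ⟨T, mem_minFragments.2 hT, hTS.trans sdiff_subset⟩

lemma exists_sdiff_eq_of_mem_minFragments {H : Finset (Finset α)} {W T : Finset α}
    (hT : T ∈ minFragments H W) : ∃ S ∈ H, S \ W = T :=
  mem_image.1 (mem_minFragments.1 hT).prop

lemma subset_of_mem_minFragments {H : Finset (Finset α)} {W T S : Finset α}
    (hT : T ∈ minFragments H W) (hS : S ∈ H) (hSW : S ⊆ W ∪ T) : T ⊆ S :=
  ((mem_minFragments.1 hT).le_of_le (mem_image_of_mem (· \ W) hS)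
    (sdiff_le_iff.2 hSW)).trans sdiff_subset

/-- The members of `H` are successively replaced by their minimum fragments with respect to
`W 0, W 1, …`, and after step `i` only the fragments with fewer than `2 ^ (R - (i + 1))` elements
are kept. -/
def smallFragments (H : Finset (Finset α)) (W : ℕ → Finset α) (R : ℕ) :
    ℕ → Finset (Finset α)
  | 0 => H
  | i + 1 => {T ∈ minFragments (smallFragments H W R i) (W i) | #T < 2 ^ (R - (i + 1))}

/-- The fragments that are discarded in step `i` of the construction of `smallFragments`. -/
def largeFragments (H : Finset (Finset α)) (W : ℕ → Finset α) (R i : ℕ) :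
    Finset (Finset α) :=
  {T ∈ minFragments (smallFragments H W R i) (W i) | 2 ^ (R - (i + 1)) ≤ #T}

variable {H : Finset (Finset α)} {W W' : ℕ → Finset α} {R i : ℕ}

lemma card_lt_of_mem_smallFragments (hH : ∀ S ∈ H, #S < 2 ^ R) :
    ∀ T ∈ smallFragments H W R i, #T < 2 ^ (R - i) := by
  cases i with
  | zero => exact hH
  | succ i => exact fun T hT ↦ (mem_filter.1 hT).2

lemma disjoint_of_mem_smallFragments {T : Finset α} (hT : T ∈ smallFragments H W R i) {j : ℕ}
    (hj : j < i) : Disjoint T (W j) := by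
  induction i generalizing T with
  | zero => omega
  | succ i ih =>
    obtain ⟨S, hS, rfl⟩ := exists_sdiff_eq_of_mem_minFragments (mem_filter.1 hT).1
    rcases Nat.lt_succ_iff_lt_or_eq.1 hj with h | rfl
    · exact (ih hS h).mono_left sdiff_subset
    · exact sdiff_disjoint

lemma exists_subset_union_of_mem_smallFragments {T : Finset α}
    (hT : T ∈ smallFragments H W R i) : ∃ S ∈ H, S ⊆ T ∪ (range i).biUnion W := by
  induction i generalizing T with
  | zero => exact ⟨T, hT, subset_union_left⟩
  | succ i ih =>
    obtain ⟨T', hT', rfl⟩ := exists_sdiff_eq_of_mem_minFragments (mem_filter.1 hT).1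
    obtain ⟨S, hS, hST⟩ := ih hT'
    refine ⟨S, hS, hST.trans ?_⟩
    rw [range_add_one, biUnion_insert, ← union_assoc, sdiff_union_self_eq_union]
    exact union_subset_union_left subset_union_left

lemma exists_mem_fragments_subset {S : Finset α} (hS : S ∈ H) :
    (∃ T ∈ smallFragments H W R i, T ⊆ S) ∨ ∃ j < i, ∃ T ∈ largeFragments H W R j, T ⊆ S := by
  induction i with
  | zero => exact Or.inl ⟨S, hS, Subset.rfl⟩
  | succ i ih =>
    rcases ih with ⟨T, hT, hTS⟩ | ⟨j, hj, h⟩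
    · obtain ⟨U, hU, hUT⟩ := exists_mem_minFragments_subset hT (W i)
      rcases lt_or_ge #U (2 ^ (R - (i + 1))) with h | h
      · exact Or.inl ⟨U, mem_filter.2 ⟨hU, h⟩, hUT.trans hTS⟩
      · exact Or.inr ⟨i, i.lt_succ_self, U, mem_filter.2 ⟨hU, h⟩, hUT.trans hTS⟩
    · exact Or.inr ⟨j, hj.trans i.lt_succ_self, h⟩

lemma smallFragments_congr (h : ∀ j < i, W j = W' j) :
    smallFragments H W R i = smallFragments H W' R i := by
  induction i with
  | zero => rfl
  | succ i ih =>
    simp only [smallFragments, ih fun j hj ↦ h j (hj.trans i.lt_succ_self), h i i.lt_succ_self]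

lemma exists_subset_biUnion_of_not_isPSmall {p : ℝ} (hp : 0 ≤ p) (hH : ∀ S ∈ H, #S < 2 ^ R)
    (hsmall : ¬ IsPSmall p H)
    (hcost : ∑ i ∈ range R, ∑ T ∈ largeFragments H W R i, p ^ #T < 1 / 2) :
    ∃ S ∈ H, S ⊆ (range R).biUnion W := by
  obtain ⟨T, hT⟩ : (smallFragments H W R R).Nonempty := by
    by_contra hempty
    rw [not_nonempty_iff_eq_empty] at hempty
    rw [sum_sigma'] at hcost
    refine hsmall ⟨((range R).sigma fun i ↦ largeFragments H W R i).image Sigma.snd,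
      fun S hS ↦ ?_, (sum_image_le_of_nonneg fun _ _ ↦ by positivity).trans_lt hcost⟩
    rcases exists_mem_fragments_subset (W := W) (R := R) (i := R) hS with
      ⟨T, hT, -⟩ | ⟨j, hj, T, hT, hTS⟩
    · simp [hempty] at hT
    · exact ⟨T, mem_image.2 ⟨⟨j, T⟩, mem_sigma.2 ⟨mem_range.2 hj, hT⟩, rfl⟩, hTS⟩
  obtain rfl : T = ∅ := by
    simpa using card_lt_of_mem_smallFragments hH T hT
  simpa using exists_subset_union_of_mem_smallFragments hT

-- The set `Z W'` is a member of `smallFragments H W' R i` contained in `W' i`. Enlarging `W i` by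
-- `T` creates such members, and by minimality of `T` all of them contain `T`.
lemma exists_forall_largeFragments_subset (hH : ∀ S ∈ H, #S < 2 ^ R) (i : ℕ) :
    ∃ Z : (ℕ → Finset α) → Finset α, (∀ W, #(Z W) ≤ 2 ^ (R - i)) ∧
      ∀ W W' T, T ∈ largeFragments H W R i → (∀ j < i, W' j = W j) → W' i = W i ∪ T →
        T ⊆ Z W' := by
  have hZ : ∀ W' : ℕ → Finset α, ∃ Z : Finset α, #Z ≤ 2 ^ (R - i) ∧
      ((∃ S ∈ smallFragments H W' R i, S ⊆ W' i) →
        Z ∈ smallFragments H W' R i ∧ Z ⊆ W' i) := fun W' ↦ by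
    by_cases h : ∃ S ∈ smallFragments H W' R i, S ⊆ W' i
    · obtain ⟨S, hS, hSW⟩ := h
      exact ⟨S, (card_lt_of_mem_smallFragments hH S hS).le, fun _ ↦ ⟨hS, hSW⟩⟩
    · exact ⟨∅, by simp, fun h' ↦ absurd h' h⟩
  choose Z hZcard hZ using hZ
  refine ⟨Z, hZcard, fun W W' T hT hlt hi ↦ ?_⟩
  have hmin := (mem_filter.1 hT).1
  obtain ⟨S, hS, hST⟩ := exists_sdiff_eq_of_mem_minFragments hmin
  have hSW : S ⊆ W i ∪ T := sdiff_le_iff.1 hST.le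
  have hZW := hZ W'
  rw [smallFragments_congr hlt, hi] at hZW
  obtain ⟨hZmem, hZsub⟩ := hZW ⟨S, hS, hSW⟩
  exact subset_of_mem_minFragments hmin hZmem hZsub

end Fragments

section ColorClasses

variable {α κ : Type*} [Fintype α] [DecidableEq κ]

/-- The colour classes of `c` in the colours `e 0, e 1, …`; for a uniformly random `c` they play
the role of the random sets `W 0, W 1, …` in `smallFragments`. -/
def colorClasses (c : α → κ) (e : ℕ → κ) (i : ℕ) : Finset α := {a | c a = e i}

lemma mem_colorClasses {c : α → κ} {e : ℕ → κ} {i : ℕ} {a : α} :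
    a ∈ colorClasses c e i ↔ c a = e i := by
  simp only [colorClasses, mem_filter_univ]

variable [DecidableEq α]

lemma colorClasses_piecewise_self (T : Finset α) (c : α → κ) (e : ℕ → κ) (i : ℕ) :
    colorClasses (T.piecewise (fun _ ↦ e i) c) e i = colorClasses c e i ∪ T := by
  ext a
  by_cases ha : a ∈ T <;> simp [mem_colorClasses, ha]

lemma colorClasses_piecewise_of_disjoint {T : Finset α} {c : α → κ} {e : ℕ → κ} {k : κ} {j : ℕ}
    (hT : Disjoint T (colorClasses c e j)) (hj : e j ≠ k) :
    colorClasses (T.piecewise (fun _ ↦ k) c) e j = colorClasses c e j := by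
  ext a
  by_cases ha : a ∈ T
  · simpa [mem_colorClasses, ha, hj.symm] using
      mem_colorClasses.not.1 (disjoint_left.1 hT ha)
  · simp [mem_colorClasses, ha]

end ColorClasses

section RandomColorings

variable {α κ : Type*} [DecidableEq α] [Fintype α] [Fintype κ]

lemma sum_piecewise_const_le (T : Finset α) (k : κ) {f : (α → κ) → ℝ} (hf : ∀ c, 0 ≤ f c) :
    ∑ c, f (T.piecewise (fun _ ↦ k) c) ≤ (Fintype.card κ : ℝ) ^ #T * ∑ c, f c := by
  classical
  have hfiber : ∀ c' : α → κ, #{c | T.piecewise (fun _ ↦ k) c = c'} ≤ Fintype.card κ ^ #T := by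
    intro c'
    rw [← Fintype.card_coe T, ← Fintype.card_fun, ← card_univ]
    refine card_le_card_of_injOn (fun c (a : T) ↦ c a) (fun _ _ ↦ mem_coe.2 (mem_univ _)) ?_
    intro c hc d hd hcd
    simp only [coe_filter, mem_univ, true_and, Set.mem_ofPred_eq] at hc hd
    funext a
    by_cases ha : a ∈ T
    · exact congrFun hcd ⟨a, ha⟩
    · simpa [piecewise_eq_of_notMem, ha] using congrFun (hc.trans hd.symm) a
  calc ∑ c, f (T.piecewise (fun _ ↦ k) c)
      = ∑ c', (#{c | T.piecewise (fun _ ↦ k) c = c'} : ℝ) * f c' := by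
        simp_rw [← nsmul_eq_mul]
        exact (sum_comp f _).trans (sum_subset (subset_univ _) (by simp +contextual))
    _ ≤ ∑ c', (Fintype.card κ : ℝ) ^ #T * f c' := by
        gcongr with c'
        · exact hf c'
        · exact_mod_cast hfiber c'
    _ = (Fintype.card κ : ℝ) ^ #T * ∑ c, f c := (mul_sum ..).symm

lemma sum_sum_pow_card_le_of_piecewise {𝒯 𝒰 : (α → κ) → Finset (Finset α)} {k : κ}
    (h : ∀ c, ∀ T ∈ 𝒯 c, T ∈ 𝒰 (T.piecewise (fun _ ↦ k) c)) {p : ℝ} (hp : 0 ≤ p) :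
    ∑ c, ∑ T ∈ 𝒯 c, p ^ #T ≤ ∑ c, ∑ T ∈ 𝒰 c, (Fintype.card κ * p) ^ #T := by
  let f : Finset α → (α → κ) → ℝ := fun T c ↦ if T ∈ 𝒰 c then p ^ #T else 0
  have hf : ∀ T c, 0 ≤ f T c := fun T c ↦ by
    simp only [f]; split_ifs <;> positivity
  calc ∑ c, ∑ T ∈ 𝒯 c, p ^ #T
      = ∑ c, ∑ T ∈ 𝒯 c, f T (T.piecewise (fun _ ↦ k) c) :=
        sum_congr rfl fun c _ ↦ sum_congr rfl fun T hT ↦ (if_pos (h c T hT)).symm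
    _ ≤ ∑ c, ∑ T, f T (T.piecewise (fun _ ↦ k) c) :=
        sum_le_sum fun c _ ↦ sum_le_univ_sum_of_nonneg fun T ↦ hf T _
    _ = ∑ T, ∑ c, f T (T.piecewise (fun _ ↦ k) c) := sum_comm
    _ ≤ ∑ T, (Fintype.card κ : ℝ) ^ #T * ∑ c, f T c :=
        sum_le_sum fun T _ ↦ sum_piecewise_const_le T k (hf T)
    _ = ∑ c, ∑ T, (Fintype.card κ : ℝ) ^ #T * f T c := by
        simp_rw [mul_sum]; exact sum_comm
    _ = ∑ c, ∑ T ∈ 𝒰 c, (Fintype.card κ * p) ^ #T := by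
        simp only [f, mul_ite, mul_zero, ← mul_pow, sum_ite_mem, univ_inter]

lemma sum_pow_card_le_four_mul {α : Type*} {Z : Finset α} {l : ℕ} (hl : 1 ≤ l)
    (hZ : #Z ≤ 2 * l) {q : ℝ} (hq : 0 ≤ q) (hq' : 4 * q ≤ 1) :
    ∑ T ∈ Z.powerset with l ≤ #T, q ^ #T ≤ 4 * q :=
  calc ∑ T ∈ Z.powerset with l ≤ #T, q ^ #T ≤ ∑ T ∈ Z.powerset with l ≤ #T, q ^ l :=
        sum_le_sum fun _ hT ↦ pow_le_pow_of_le_one hq (by linarith) (mem_filter.1 hT).2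
    _ ≤ ∑ _T ∈ Z.powerset, q ^ l :=
        sum_le_sum_of_subset_of_nonneg (filter_subset ..) fun _ _ _ ↦ by positivity
    _ = (2 : ℝ) ^ #Z * q ^ l := by simp
    _ ≤ 2 ^ (2 * l) * q ^ l := by gcongr; norm_num
    _ = (4 * q) ^ l := by rw [pow_mul, ← mul_pow]; norm_num
    _ ≤ 4 * q := pow_le_of_le_one (by positivity) hq' (by omega)

variable [DecidableEq κ]

lemma sum_sum_largeFragments_le {H : Finset (Finset α)} {R i : ℕ} (hH : ∀ S ∈ H, #S < 2 ^ R)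
    (hi : i < R) {e : ℕ → κ} (he : ∀ j < i, e j ≠ e i) {p : ℝ} (hp : 0 ≤ p)
    (hKp : 4 * (Fintype.card κ * p) ≤ 1) :
    ∑ c, ∑ T ∈ largeFragments H (colorClasses c e) R i, p ^ #T ≤
      Fintype.card (α → κ) * (4 * (Fintype.card κ * p)) := by
  obtain ⟨Z, hZcard, hZ⟩ := exists_forall_largeFragments_subset hH i
  let 𝒰 : (α → κ) → Finset (Finset α) := fun c ↦
    {T ∈ (Z (colorClasses c e)).powerset | 2 ^ (R - (i + 1)) ≤ #T}
  have htransfer : ∀ c, ∀ T ∈ largeFragments H (colorClasses c e) R i,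
      T ∈ 𝒰 (T.piecewise (fun _ ↦ e i) c) := fun c T hT ↦ by
    obtain ⟨hTmin, hTcard⟩ := mem_filter.1 hT
    obtain ⟨S, hS, rfl⟩ := exists_sdiff_eq_of_mem_minFragments hTmin
    refine mem_filter.2 ⟨mem_powerset.2 (hZ _ _ _ hT (fun j hj ↦ ?_) ?_), hTcard⟩
    · exact colorClasses_piecewise_of_disjoint
        ((disjoint_of_mem_smallFragments hS hj).mono_left sdiff_subset) (he j hj)
    · exact colorClasses_piecewise_self _ c e i
  have hpow : 2 ^ (R - i) = 2 * 2 ^ (R - (i + 1)) := by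
    rw [← pow_succ']; congr 1; omega
  calc _ ≤ ∑ c, ∑ T ∈ 𝒰 c, (Fintype.card κ * p) ^ #T :=
        sum_sum_pow_card_le_of_piecewise htransfer hp
    _ ≤ ∑ _c : α → κ, 4 * (Fintype.card κ * p) := sum_le_sum fun c _ ↦
        sum_pow_card_le_four_mul Nat.one_le_two_pow ((hZcard _).trans_eq hpow) (by positivity) hKp
    _ = Fintype.card (α → κ) * (4 * (Fintype.card κ * p)) := by
        rw [sum_const, card_univ, nsmul_eq_mul]

end RandomColorings

-- Colour `α` uniformly with the colours `Fin R × Bool`. On average the discarded fragments of `A`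
-- along the classes of colour `(i, true)` and those of `B` along the classes of colour
-- `(i, false)` are so cheap that both families have a member inside the respective classes.
theorem exists_disjoint_of_not_isPSmall {α : Type*} [Finite α] {A B : Finset (Finset α)} {R : ℕ}
    (hR : R ≠ 0) (hA : ∀ S ∈ A, #S < 2 ^ R) (hB : ∀ S ∈ B, #S < 2 ^ R) {p : ℝ} (hp : 0 ≤ p)
    (hpR : 32 * (R : ℝ) ^ 2 * p < 1) (hAp : ¬ IsPSmall p A) (hBp : ¬ IsPSmall p B) :
    ∃ S ∈ A, ∃ T ∈ B, Disjoint S T := by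
  classical
  cases nonempty_fintype α
  have : NeZero R := ⟨hR⟩
  let e : Bool → ℕ → Fin R × Bool := fun b i ↦ (Fin.ofNat R i, b)
  let cost : Finset (Finset α) → Bool → (α → Fin R × Bool) → ℝ := fun H b c ↦
    ∑ i ∈ range R, ∑ T ∈ largeFragments H (colorClasses c (e b)) R i, p ^ #T
  have hcost_nonneg : ∀ H b c, 0 ≤ cost H b c := fun H b c ↦
    sum_nonneg fun i _ ↦ sum_nonneg fun T _ ↦ by positivity
  have hcost : ∀ H b, (∀ S ∈ H, #S < 2 ^ R) →
      ∑ c, cost H b c ≤ Fintype.card (α → Fin R × Bool) * (8 * R ^ 2 * p) := fun H b hH ↦ by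
    have hR1 : (1 : ℝ) ≤ R := Nat.one_le_cast.2 (Nat.pos_of_ne_zero hR)
    have hcard : (Fintype.card (Fin R × Bool) : ℝ) = R * 2 := by simp
    rw [sum_comm]
    refine (sum_le_card_nsmul _ _ _ fun i hi ↦ sum_sum_largeFragments_le hH (mem_range.1 hi)
      (fun j hj h ↦ ?_) hp ?_).trans_eq ?_
    · have hji := congrArg (fun k ↦ (k.1 : ℕ)) h
      simp only [e, Fin.val_ofNat, Nat.mod_eq_of_lt (mem_range.1 hi),
        Nat.mod_eq_of_lt (hj.trans (mem_range.1 hi))] at hji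
      omega
    · rw [hcard]; nlinarith [mul_le_mul_of_nonneg_right hR1 (mul_nonneg hp (zero_le_one.trans hR1))]
    · rw [hcard, card_range, nsmul_eq_mul]; ring
  obtain ⟨c, -, hc⟩ : ∃ c ∈ univ, cost A true c + cost B false c < 1 / 2 := by
    refine exists_lt_of_sum_lt ?_
    have hpos : (0 : ℝ) < Fintype.card (α → Fin R × Bool) := Nat.cast_pos.2 Fintype.card_pos
    rw [sum_add_distrib, sum_const, nsmul_eq_mul, card_univ]
    nlinarith [hcost A true hA, hcost B false hB]
  obtain ⟨S, hS, hSW⟩ := exists_subset_biUnion_of_not_isPSmall hp hA hAp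
    ((le_add_of_nonneg_right (hcost_nonneg B false c)).trans_lt hc)
  obtain ⟨T, hT, hTW⟩ := exists_subset_biUnion_of_not_isPSmall hp hB hBp
    ((le_add_of_nonneg_left (hcost_nonneg A true c)).trans_lt hc)
  refine ⟨S, hS, T, hT, disjoint_left.2 fun a haS haT ↦ ?_⟩
  obtain ⟨i, -, hi⟩ := mem_biUnion.1 (hSW haS)
  obtain ⟨j, -, hj⟩ := mem_biUnion.1 (hTW haT)
  simpa [e] using congrArg Prod.snd ((mem_colorClasses.1 hi).symm.trans (mem_colorClasses.1 hj))

section SpreadApproximation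

variable {α : Type*} [DecidableEq α]

/-- `𝓐` is `r`-spread around `X`: its members contain `X`, and adjoining `k` elements to `X` costs
a factor of at least `r ^ k` in the number of members of `𝓐` containing the set. -/
structure IsSpreadAround (r : ℕ) (X : Finset α) (𝓐 : Finset (Finset α)) : Prop where
  nonempty : 𝓐.Nonempty
  subset : ∀ S ∈ 𝓐, X ⊆ S
  card_filter_mul_le : ∀ T, X ⊆ T → #{S ∈ 𝓐 | T ⊆ S} * r ^ #T ≤ #𝓐 * r ^ #X

lemma exists_isSpreadAround_filter [Finite α] {𝓕 : Finset (Finset α)} (h𝓕 : 𝓕.Nonempty) (r : ℕ) :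
    ∃ X, #𝓕 ≤ #{S ∈ 𝓕 | X ⊆ S} * r ^ #X ∧ IsSpreadAround r X {S ∈ 𝓕 | X ⊆ S} := by
  cases nonempty_fintype α
  obtain ⟨X, hX, hmax⟩ := exists_max_image
    {X : Finset α | #𝓕 ≤ #{S ∈ 𝓕 | X ⊆ S} * r ^ #X} card ⟨∅, by simp⟩
  rw [mem_filter_univ] at hX
  have hne : {S ∈ 𝓕 | X ⊆ S}.Nonempty := card_pos.1 <|
    Nat.pos_of_mul_pos_right (h𝓕.card_pos.trans_le hX)
  refine ⟨X, hX, hne, fun S hS ↦ (mem_filter.1 hS).2, fun T hXT ↦ ?_⟩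
  rcases eq_or_ssubset_of_subset hXT with rfl | hXT
  · exact Nat.mul_le_mul_right _ (card_filter_le _ _)
  · have hT : ¬ #𝓕 ≤ #{S ∈ 𝓕 | T ⊆ S} * r ^ #T := fun h ↦
      (card_lt_card hXT).not_ge (hmax T ((mem_filter_univ _).2 h))
    calc #{S ∈ {S ∈ 𝓕 | X ⊆ S} | T ⊆ S} * r ^ #T ≤ #{S ∈ 𝓕 | T ⊆ S} * r ^ #T := by
          gcongr; exact filter_subset _ _
      _ ≤ #𝓕 := (not_le.1 hT).le
      _ ≤ _ := hX

lemma exists_spread_decomposition [Finite α] {r q B : ℕ} (𝓕 : Finset (Finset α))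
    (hB : ∀ X, q < #X → #{S ∈ 𝓕 | X ⊆ S} * r ^ #X ≤ B) :
    ∃ 𝒮 : Finset (Finset α), ∃ 𝓡 ⊆ 𝓕, #𝓡 ≤ B ∧
      (∀ X ∈ 𝒮, #X ≤ q ∧ ∃ 𝓐 ⊆ 𝓕, IsSpreadAround r X 𝓐) ∧
      ∀ S ∈ 𝓕 \ 𝓡, ∃ X ∈ 𝒮, X ⊆ S := by
  induction 𝓕 using Finset.strongInduction with
  | H 𝓕 ih =>
    rcases 𝓕.eq_empty_or_nonempty with rfl | hne
    · exact ⟨∅, ∅, by simp⟩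
    obtain ⟨X, hX, hspread⟩ := exists_isSpreadAround_filter hne r
    rcases lt_or_ge q #X with hq | hq
    · exact ⟨∅, 𝓕, Subset.rfl, hX.trans (hB X hq), by simp⟩
    have hsub : {S ∈ 𝓕 | X ⊆ S} ⊆ 𝓕 := filter_subset _ _
    obtain ⟨𝒮, 𝓡, h𝓡, h𝓡B, h𝒮, hcover⟩ := ih (𝓕 \ {S ∈ 𝓕 | X ⊆ S})
      (sdiff_ssubset hsub hspread.nonempty) fun Y hY ↦
        (Nat.mul_le_mul_right _ (card_le_card (filter_subset_filter _ sdiff_subset))).trans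
          (hB Y hY)
    refine ⟨insert X 𝒮, 𝓡, h𝓡.trans sdiff_subset, h𝓡B, fun Y hY ↦ ?_, fun S hS ↦ ?_⟩
    · rcases mem_insert.1 hY with rfl | hY
      · exact ⟨hq, _, hsub, hspread⟩
      · exact (h𝒮 Y hY).imp_right fun ⟨𝓐, h𝓐, hY⟩ ↦ ⟨𝓐, h𝓐.trans sdiff_subset, hY⟩
    · obtain ⟨hS, hS𝓡⟩ := mem_sdiff.1 hS
      by_cases hXS : X ⊆ S
      · exact ⟨X, mem_insert_self _ _, hXS⟩
      · obtain ⟨Y, hY, hYS⟩ := hcover S (by simp [hS, hS𝓡, hXS])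
        exact ⟨Y, mem_insert_of_mem hY, hYS⟩

namespace IsSpreadAround

variable {r : ℕ} {X Y : Finset α} {𝓐 𝓑 : Finset (Finset α)}

lemma card_filter_subset_sdiff_le (h : IsSpreadAround r X 𝓐) (hr : 0 < r) (T : Finset α) :
    (#{S ∈ 𝓐 | T ⊆ S \ X} : ℝ) ≤ #𝓐 * (r : ℝ)⁻¹ ^ #T := by
  have : (0 : ℝ) < r := Nat.cast_pos.2 hr
  by_cases hTX : Disjoint X T
  · have hle := h.card_filter_mul_le (X ∪ T) subset_union_left
    rw [card_union_of_disjoint hTX, pow_add, mul_comm (r ^ #X), ← mul_assoc] at hle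
    rw [inv_pow, ← div_eq_mul_inv, le_div_iff₀ (by positivity)]
    norm_cast
    refine (Nat.mul_le_mul_right _ (card_le_card ?_)).trans
      (Nat.le_of_mul_le_mul_right hle (by positivity))
    exact monotone_filter_right _ fun S hS hTS ↦
      union_subset (h.subset S hS) (hTS.trans sdiff_subset)
  · rw [filter_eq_empty_iff.2 fun S _ hTS ↦ hTX (disjoint_sdiff.mono_right hTS)]
    simp only [card_empty, Nat.cast_zero]
    positivity

lemma one_le_sum_of_cover (h : IsSpreadAround r X 𝓐) (hr : 0 < r) {𝒯 : Finset (Finset α)}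
    (h𝒯 : ∀ S ∈ 𝓐, ∃ T ∈ 𝒯, T ⊆ S \ X) : 1 ≤ ∑ T ∈ 𝒯, (r : ℝ)⁻¹ ^ #T := by
  have hcover : 𝓐 ⊆ 𝒯.biUnion fun T ↦ {S ∈ 𝓐 | T ⊆ S \ X} := fun S hS ↦
    let ⟨T, hT, hTS⟩ := h𝒯 S hS
    mem_biUnion.2 ⟨T, hT, mem_filter.2 ⟨hS, hTS⟩⟩
  refine le_of_mul_le_mul_left ?_ (Nat.cast_pos.2 h.nonempty.card_pos : (0 : ℝ) < #𝓐)
  calc (#𝓐 : ℝ) * 1 ≤ ∑ T ∈ 𝒯, (#{S ∈ 𝓐 | T ⊆ S \ X} : ℝ) := by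
        rw [mul_one]; exact_mod_cast (card_le_card hcover).trans card_biUnion_le
    _ ≤ ∑ T ∈ 𝒯, #𝓐 * (r : ℝ)⁻¹ ^ #T := sum_le_sum fun T _ ↦ h.card_filter_subset_sdiff_le hr T
    _ = #𝓐 * ∑ T ∈ 𝒯, (r : ℝ)⁻¹ ^ #T := (mul_sum ..).symm

lemma not_isPSmall_link (h : IsSpreadAround r X 𝓐) (hr : 0 < r) (hY : 2 * #Y ≤ r) :
    ¬ IsPSmall (r : ℝ)⁻¹ {S ∈ 𝓐.image (· \ X) | Disjoint S Y} := by
  rintro ⟨G, hG, hsum⟩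
  have hcover : ∀ S ∈ 𝓐, ∃ T ∈ G ∪ Y.image singleton, T ⊆ S \ X := fun S hS ↦ by
    by_cases hd : Disjoint (S \ X) Y
    · obtain ⟨T, hT, hTS⟩ := hG _ (mem_filter.2 ⟨mem_image_of_mem _ hS, hd⟩)
      exact ⟨T, mem_union_left _ hT, hTS⟩
    · obtain ⟨y, hyS, hyY⟩ := not_disjoint_iff.1 hd
      exact ⟨{y}, mem_union_right _ (mem_image_of_mem _ hyY), singleton_subset_iff.2 hyS⟩
  have hle := h.one_le_sum_of_cover hr hcover
  have hunion := sum_union_inter (s₁ := G) (s₂ := Y.image singleton)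
    (f := fun T ↦ (r : ℝ)⁻¹ ^ #T)
  have hinter : 0 ≤ ∑ T ∈ G ∩ Y.image singleton, (r : ℝ)⁻¹ ^ #T :=
    sum_nonneg fun _ _ ↦ by positivity
  have hsingle : ∑ T ∈ Y.image singleton, (r : ℝ)⁻¹ ^ #T ≤ 1 / 2 := by
    rw [sum_image singleton_injective.injOn]
    simp only [card_singleton, pow_one, sum_const, nsmul_eq_mul]
    rw [← div_eq_mul_inv, div_le_div_iff₀ (Nat.cast_pos.2 hr) two_pos]
    exact_mod_cast (by omega : #Y * 2 ≤ 1 * r)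
  linarith

lemma exists_inter_subset_inter [Finite α] {R : ℕ} (hR : R ≠ 0) (hRr : 32 * R ^ 2 < r)
    (h𝓐 : IsSpreadAround r X 𝓐) (h𝓑 : IsSpreadAround r Y 𝓑) (hX : 2 * #X ≤ r) (hY : 2 * #Y ≤ r)
    (h𝓐R : ∀ S ∈ 𝓐, #S < 2 ^ R) (h𝓑R : ∀ S ∈ 𝓑, #S < 2 ^ R) :
    ∃ S ∈ 𝓐, ∃ T ∈ 𝓑, S ∩ T ⊆ X ∩ Y := by
  have hr : 0 < r := by omega
  have hp : 32 * (R : ℝ) ^ 2 * (r : ℝ)⁻¹ < 1 := by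
    rw [← div_eq_mul_inv, div_lt_one (Nat.cast_pos.2 hr)]
    exact_mod_cast hRr
  have hlink : ∀ {𝓐 : Finset (Finset α)}, (∀ S ∈ 𝓐, #S < 2 ^ R) → ∀ X Y : Finset α,
      ∀ S ∈ ({S ∈ 𝓐.image (· \ X) | Disjoint S Y} : Finset _), #S < 2 ^ R := by
    intro 𝓐 h X Y S' hS'
    obtain ⟨S, hS, rfl⟩ := mem_image.1 (mem_filter.1 hS').1
    exact (card_le_card sdiff_subset).trans_lt (h S hS)
  obtain ⟨S', hS', T', hT', hd⟩ := exists_disjoint_of_not_isPSmall hR (hlink h𝓐R X Y)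
    (hlink h𝓑R Y X) (by positivity) hp (h𝓐.not_isPSmall_link hr hY) (h𝓑.not_isPSmall_link hr hX)
  simp only [mem_filter, mem_image] at hS' hT'
  obtain ⟨⟨S, hS, rfl⟩, hSY⟩ := hS'
  obtain ⟨⟨T, hT, rfl⟩, hTX⟩ := hT'
  refine ⟨S, hS, T, hT, fun a ha ↦ ?_⟩
  simp only [disjoint_left, mem_sdiff, mem_inter] at hSY hTX hd ha ⊢
  grind

end IsSpreadAround

-- The spread approximation method of Kupavskii and Zakharov.
lemma exists_spread_approximation [Finite α] {𝓕 : Finset (Finset α)} {r q R B t : ℕ} (hR : R ≠ 0)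
    (hRr : 32 * R ^ 2 < r) (hqr : 2 * q ≤ r) (hcard : ∀ S ∈ 𝓕, #S < 2 ^ R)
    (hB : ∀ X, q < #X → #{S ∈ 𝓕 | X ⊆ S} * r ^ #X ≤ B)
    (h𝓕 : ∀ S ∈ 𝓕, ∀ T ∈ 𝓕, t ≤ #(S ∩ T)) :
    ∃ 𝒮 : Finset (Finset α), ∃ 𝓡 ⊆ 𝓕, #𝓡 ≤ B ∧ (∀ X ∈ 𝒮, #X ≤ q) ∧
      (∀ X ∈ 𝒮, ∀ Y ∈ 𝒮, t ≤ #(X ∩ Y)) ∧ ∀ S ∈ 𝓕 \ 𝓡, ∃ X ∈ 𝒮, X ⊆ S := by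
  obtain ⟨𝒮, 𝓡, h𝓡, h𝓡B, h𝒮, hcover⟩ := exists_spread_decomposition 𝓕 hB
  refine ⟨𝒮, 𝓡, h𝓡, h𝓡B, fun X hX ↦ (h𝒮 X hX).1, fun X hX Y hY ↦ ?_, hcover⟩
  obtain ⟨hXq, 𝓐, h𝓐, hspreadX⟩ := h𝒮 X hX
  obtain ⟨hYq, 𝓑, h𝓑, hspreadY⟩ := h𝒮 Y hY
  obtain ⟨S, hS, T, hT, hST⟩ := hspreadX.exists_inter_subset_inter hR hRr hspreadY
    (by omega) (by omega) (fun S hS ↦ hcard S (h𝓐 hS)) (fun S hS ↦ hcard S (h𝓑 hS))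
  exact (h𝓕 S (h𝓐 hS) T (h𝓑 hT)).trans (card_le_card hST)

lemma exists_mem_sdiff_mem_of_card_le_card_inter {X Z Y : Finset α} (h : #Y ≤ #(X ∩ Z))
    (hYZ : ¬ Y ⊆ Z) : ∃ y ∈ Z \ Y, y ∈ X := by
  by_contra! hXZ
  have hsub : X ∩ Z ⊆ Y := fun a ha ↦ by
    by_contra haY
    exact hXZ a (mem_sdiff.2 ⟨(mem_inter.1 ha).2, haY⟩) (mem_inter.1 ha).1
  exact hYZ ((eq_of_subset_of_card_le hsub h).symm.subset.trans inter_subset_right)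

lemma card_le_of_forall_exists_not_subset {𝒮 𝓖 : Finset (Finset α)} {q t D : ℕ}
    (hq : ∀ X ∈ 𝒮, #X ≤ q) (ht : ∀ X ∈ 𝒮, ∀ Y ∈ 𝒮, t ≤ #(X ∩ Y))
    (hcore : ∀ Y : Finset α, #Y = t → ∃ X ∈ 𝒮, ¬ Y ⊆ X) (hcover : ∀ S ∈ 𝓖, ∃ X ∈ 𝒮, X ⊆ S)
    (hD : ∀ Y : Finset α, #Y = t + 1 → #{S ∈ 𝓖 | Y ⊆ S} ≤ D) : #𝓖 ≤ 2 ^ q * (q * D) := by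
  rcases 𝒮.eq_empty_or_nonempty with rfl | ⟨X₁, hX₁⟩
  · have h𝓖 : 𝓖 = ∅ := eq_empty_of_forall_notMem fun S hS ↦ by simpa using hcover S hS
    simp [h𝓖]
  choose! Z hZ hYZ using hcore
  have hsub : 𝓖 ⊆ (X₁.powersetCard t).biUnion fun Y ↦
      (Z Y \ Y).biUnion fun y ↦ {S ∈ 𝓖 | insert y Y ⊆ S} := fun S hS ↦ by
    obtain ⟨X, hX, hXS⟩ := hcover S hS
    obtain ⟨Y, hY, rfl⟩ := exists_subset_card_eq (ht X₁ hX₁ X hX)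
    obtain ⟨hYX₁, hYX⟩ := subset_inter_iff.1 hY
    obtain ⟨y, hyZ, hyX⟩ :=
      exists_mem_sdiff_mem_of_card_le_card_inter (ht X hX (Z Y) (hZ Y rfl)) (hYZ Y rfl)
    exact mem_biUnion.2 ⟨Y, mem_powersetCard.2 ⟨hYX₁, rfl⟩, mem_biUnion.2
      ⟨y, hyZ, mem_filter.2 ⟨hS, insert_subset (hXS hyX) (hYX.trans hXS)⟩⟩⟩
  calc #𝓖 ≤ #(X₁.powersetCard t) * (q * D) := by
        refine (card_le_card hsub).trans (card_biUnion_le_card_mul _ _ _ fun Y hY ↦ ?_)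
        have hYt := (mem_powersetCard.1 hY).2
        refine (card_biUnion_le_card_mul _ _ D fun y hy ↦ hD _ ?_).trans
          (Nat.mul_le_mul_right _ ((card_le_card sdiff_subset).trans (hq _ (hZ Y hYt))))
        rw [card_insert_of_notMem (mem_sdiff.1 hy).2, hYt]
    _ ≤ 2 ^ q * (q * D) := by
        gcongr
        rw [card_powersetCard]
        exact (Nat.choose_le_two_pow _ _).trans (Nat.pow_le_pow_right two_pos (hq X₁ hX₁))

theorem exists_common_subset_or_card_sdiff_le [Finite α] {𝓕 : Finset (Finset α)}
    {r q R B D t : ℕ} (hR : R ≠ 0) (hRr : 32 * R ^ 2 < r) (hqr : 2 * q ≤ r)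
    (hcard : ∀ S ∈ 𝓕, #S < 2 ^ R) (hB : ∀ X, q < #X → #{S ∈ 𝓕 | X ⊆ S} * r ^ #X ≤ B)
    (hD : ∀ Y, #Y = t + 1 → #{S ∈ 𝓕 | Y ⊆ S} ≤ D) (h𝓕 : ∀ S ∈ 𝓕, ∀ T ∈ 𝓕, t ≤ #(S ∩ T)) :
    ∃ 𝓡 ⊆ 𝓕, #𝓡 ≤ B ∧
      ((∃ Y, #Y = t ∧ ∀ S ∈ 𝓕 \ 𝓡, Y ⊆ S) ∨ #(𝓕 \ 𝓡) ≤ 2 ^ q * (q * D)) := by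
  obtain ⟨𝒮, 𝓡, h𝓡, h𝓡B, hq, ht, hcover⟩ :=
    exists_spread_approximation hR hRr hqr hcard hB h𝓕
  refine ⟨𝓡, h𝓡, h𝓡B, ?_⟩
  by_cases hcore : ∃ Y, #Y = t ∧ ∀ X ∈ 𝒮, Y ⊆ X
  · obtain ⟨Y, hY, hYX⟩ := hcore
    refine Or.inl ⟨Y, hY, fun S hS ↦ ?_⟩
    obtain ⟨X, hX, hXS⟩ := hcover S hS
    exact (hYX X hX).trans hXS
  · push Not at hcore
    refine Or.inr (card_le_of_forall_exists_not_subset hq ht hcore hcover fun Y hY ↦ ?_)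
    exact (card_le_card (filter_subset_filter _ sdiff_subset)).trans (hD Y hY)

end SpreadApproximation

section PermGraphs

lemma exists_perm_fixing_extending {α : Type*} [Finite α] (I : Finset α) (σ : Equiv.Perm α) :
    ∃ ρ : Equiv.Perm α, (∀ i ∈ I, ρ i = i) ∧ ∀ i ∉ I, σ i ∉ I → ρ i = σ i := by
  classical
  cases nonempty_fintype α
  obtain ⟨g, hg⟩ := exists_equiv_extend_of_card_eq (α := α) (t := univ) (by simp)
    (s := {i | i ∈ I ∨ σ i ∉ I}) (f := fun i ↦ if i ∈ I then i else σ i) (subset_univ _)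
    (fun i hi j hj hij ↦ by grind [σ.injective.eq_iff])
  refine ⟨g.trans (Equiv.subtypeUnivEquiv mem_univ), fun i hi ↦ ?_, fun i hi hσi ↦ ?_⟩
  · simp [hg i (by simp [hi]), hi]
  · simp [hg i (by simp [hσi]), hi]

variable {α : Type*} [Fintype α] [DecidableEq α] {σ τ : Equiv.Perm α} {X : Finset (α × α)}

/-- The graph `{(i, σ i)}` of a permutation `σ`, through which results on set families are applied
to families of permutations. -/
def permGraph (σ : Equiv.Perm α) : Finset (α × α) := univ.image fun i ↦ (i, σ i)

@[simp]
lemma mem_permGraph {x : α × α} : x ∈ permGraph σ ↔ σ x.1 = x.2 := by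
  simp [permGraph, Prod.ext_iff]

lemma card_permGraph (σ : Equiv.Perm α) : #(permGraph σ) = Fintype.card α :=
  card_image_of_injective _ fun _ _ h ↦ congr_arg Prod.fst h

lemma permGraph_injective : Function.Injective (permGraph (α := α)) := fun σ τ h ↦
  Equiv.ext fun i ↦ (mem_permGraph.1 (h ▸ mem_permGraph.2 rfl : (i, σ i) ∈ permGraph τ)).symm

lemma card_permGraph_inter (σ τ : Equiv.Perm α) :
    #(permGraph σ ∩ permGraph τ) = #{i | σ i = τ i} := by
  refine card_nbij Prod.fst (fun x hx ↦ ?_) (fun x hx y hy hxy ↦ ?_) fun i hi ↦ ?_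
  · simp_all
  · simp only [coe_inter, Set.mem_inter_iff, mem_coe, mem_permGraph] at hx hy
    exact Prod.ext hxy (by rw [← hx.1, ← hy.1, hxy])
  · exact ⟨(i, σ i), by simp_all⟩

lemma card_image_fst_of_subset_permGraph (hX : X ⊆ permGraph σ) : #(X.image Prod.fst) = #X :=
  card_image_of_injOn fun x hx y hy hxy ↦
    Prod.ext hxy (by rw [← mem_permGraph.1 (hX hx), ← mem_permGraph.1 (hX hy), hxy])

lemma subset_permGraph_iff (hX : X ⊆ permGraph σ) :
    X ⊆ permGraph τ ↔ ∀ i ∈ X.image Prod.fst, τ i = σ i := by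
  rw [forall_mem_image]
  refine forall₂_congr fun x hx ↦ ?_
  rw [mem_permGraph, mem_permGraph.1 (hX hx)]

lemma card_filter_forall_mem_eq (σ : Equiv.Perm α) (I : Finset α) :
    #{π : Equiv.Perm α | ∀ i ∈ I, π i = σ i} = (Fintype.card α - #I)! := by
  have hfix : #{π : Equiv.Perm α | ∀ i ∈ I, π i = i} = (Fintype.card α - #I)! := by
    have h := Fintype.card_congr (Equiv.Perm.subtypeEquivSubtypePerm (· ∉ I))
    simp only [not_not] at h
    rw [← Fintype.card_subtype, ← h, Fintype.card_perm, Fintype.card_subtype_compl,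
      Fintype.card_coe]
  rw [← hfix]
  exact card_equiv (Equiv.mulLeft σ⁻¹) fun π ↦ by simp [Equiv.symm_apply_eq]

lemma exists_card_eq_forall_mem_apply_eq {α : Type*} [Fintype α] (σ : Equiv.Perm α)
    (I : Finset α) :
    ∃ s : Finset (Equiv.Perm α), #s = (Fintype.card α - #I)! ∧ ∀ π ∈ s, ∀ i ∈ I, π i = σ i := by
  classical
  exact ⟨_, card_filter_forall_mem_eq σ I, fun π hπ ↦ (mem_filter_univ π).1 hπ⟩

lemma card_filter_image_permGraph_le (F : Finset (Equiv.Perm α)) (X : Finset (α × α)) :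
    #{S ∈ F.image permGraph | X ⊆ S} ≤ (Fintype.card α - #X)! := by
  rw [filter_image]
  refine card_image_le.trans ?_
  rcases eq_empty_or_nonempty {σ ∈ F | X ⊆ permGraph σ} with h | ⟨σ, hσ⟩
  · simp [h]
  · have hX := (mem_filter.1 hσ).2
    rw [← card_image_fst_of_subset_permGraph hX, ← card_filter_forall_mem_eq σ]
    exact card_le_card fun π hπ ↦
      (mem_filter_univ _).2 ((subset_permGraph_iff hX).1 (mem_filter.1 hπ).2)

lemma card_filter_mem_iff_apply_eq (I : Finset α) :
    #{π : Equiv.Perm α | ∀ i, i ∈ I ↔ π i = i} = numDerangements (Fintype.card α - #I) := by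
  have h := Fintype.card_congr (derangements.subtypeEquiv (· ∉ I))
  simp only [not_not, card_derangements_eq_numDerangements, Fintype.card_subtype_compl,
    Fintype.card_coe] at h
  rw [h, Fintype.card_subtype]
  simp only [Function.mem_fixedPoints, Function.IsFixedPt]

lemma numDerangements_le_card (σ τ : Equiv.Perm α) (I : Finset α) :
    numDerangements (Fintype.card α - #I) ≤
      #{π : Equiv.Perm α | (∀ i ∈ I, π i = σ i) ∧ ∀ i ∉ I, π i ≠ τ i} := by
  obtain ⟨ρ, hρfix, hρ⟩ := exists_perm_fixing_extending I (σ⁻¹ * τ)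
  rw [← card_filter_mem_iff_apply_eq]
  refine card_le_card_of_injOn (σ * ρ * ·) (fun π hπ ↦ ?_) (mul_right_injective _).injOn
  simp only [coe_filter, mem_univ, true_and, Set.mem_ofPred_eq, Equiv.Perm.mul_apply] at hπ hρ ⊢
  refine ⟨fun i hi ↦ by rw [(hπ i).1 hi, hρfix i hi], fun i hi hπi ↦ ?_⟩
  rw [← Equiv.Perm.eq_inv_iff_eq] at hπi
  by_cases hτi : σ⁻¹ (τ i) ∈ I
  · have hπI : π i ∈ I := by rwa [ρ.injective (hπi.trans (hρfix _ hτi).symm)]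
    exact hi (π.injective ((hπ _).1 hπI) ▸ hπI)
  · exact hi ((hπ i).2 (ρ.injective (hπi.trans (hρ i hi hτi).symm)))

lemma card_add_numDerangements_le {α : Type*} [Fintype α] {σ τ : Equiv.Perm α}
    {s : Finset (Equiv.Perm α)} {I : Finset α} (hσ : ∀ π ∈ s, ∀ i ∈ I, π i = σ i)
    (hτ : ∀ π ∈ s, ∃ i ∉ I, π i = τ i) :
    #s + numDerangements (Fintype.card α - #I) ≤ (Fintype.card α - #I)! := by
  classical
  rw [← card_filter_forall_mem_eq σ I, ← card_filter_add_card_filter_not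
    (s := {π : Equiv.Perm α | ∀ i ∈ I, π i = σ i}) (fun π ↦ ∃ i ∉ I, π i = τ i),
    filter_filter, filter_filter]
  gcongr
  · exact fun π hπ ↦ (mem_filter_univ _).2 ⟨hσ π hπ, hτ π hπ⟩
  · simpa only [not_exists, not_and] using numDerangements_le_card σ τ I

end PermGraphs

section NontrivialFamilies

variable {n t : ℕ} {F : Finset (Equiv.Perm (Fin n))}

lemma agreements_eq_card_inter (σ π : Equiv.Perm (Fin n)) :
    agreements σ π = #(permGraph σ ∩ permGraph π) :=
  (card_permGraph_inter σ π).symm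

lemma exists_notMem_image_fst_apply_eq {σ π : Equiv.Perm (Fin n)} {Y : Finset (Fin n × Fin n)}
    (hπ : Y ⊆ permGraph π) (hσ : ¬ Y ⊆ permGraph σ) (h : #Y ≤ agreements π σ) :
    ∃ i ∉ Y.image Prod.fst, π i = σ i := by
  rw [agreements_eq_card_inter] at h
  obtain ⟨x, hx, hxπ⟩ := exists_mem_sdiff_mem_of_card_le_card_inter h hσ
  obtain ⟨hxσ, hxY⟩ := mem_sdiff.1 hx
  rw [mem_permGraph] at hxσ hxπ
  refine ⟨x.1, fun hmem ↦ hxY ?_, hxπ.trans hxσ.symm⟩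
  obtain ⟨y, hy, hyx⟩ := mem_image.1 hmem
  have hyx₂ : y.2 = x.2 := by rw [← mem_permGraph.1 (hπ hy), hyx, hxπ]
  rwa [← Prod.ext hyx hyx₂]

lemma card_filter_subset_permGraph_le (hF : IsTIntersecting t F) (hFt : ¬ IsTrivial t F)
    {Y : Finset (Fin n × Fin n)} (hY : #Y = t) :
    #{π ∈ F | Y ⊆ permGraph π} ≤ (n - t)! - numDerangements (n - t) := by
  rcases eq_empty_or_nonempty {π ∈ F | Y ⊆ permGraph π} with h | ⟨τ, hτ⟩
  · simp [h]
  have hτY := (mem_filter.1 hτ).2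
  have hcard : #(Y.image Prod.fst) = t := (card_image_fst_of_subset_permGraph hτY).trans hY
  obtain ⟨σ, hσF, hσY⟩ : ∃ σ ∈ F, ¬ Y ⊆ permGraph σ := by
    by_contra! h
    exact hFt ⟨_, hcard, τ, fun π hπ ↦ (subset_permGraph_iff hτY).1 (h π hπ)⟩
  have hle := card_add_numDerangements_le (s := {π ∈ F | Y ⊆ permGraph π})
    (fun π hπ ↦ (subset_permGraph_iff hτY).1 (mem_filter.1 hπ).2) fun π hπ ↦
      exists_notMem_image_fst_apply_eq (mem_filter.1 hπ).2 hσY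
        (hY.trans_le (hF π (mem_filter.1 hπ).1 σ hσF))
  rw [hcard, Fintype.card_fin] at hle
  exact Nat.le_sub_of_add_le hle

lemma pow_mul_factorial_sub_le_factorial {N j r : ℕ} (hj : j ≤ N) (hr : 0 < r)
    (hrN : 2 * r ^ 2 ≤ N) : r ^ j * (N - j)! ≤ N ! := by
  rcases le_total (2 * j) N with h | h
  · have hrj : r ≤ N - j + 1 := by
      have := Nat.le_self_pow two_ne_zero r
      omega
    calc r ^ j * (N - j)! ≤ (N - j)! * (N - j + 1) ^ j := by rw [mul_comm]; gcongr
      _ ≤ (N - j + j)! := Nat.factorial_mul_pow_le_factorial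
      _ = N ! := by rw [Nat.sub_add_cancel hj]
  · calc r ^ j * (N - j)! ≤ r ^ (2 * (N - N / 2)) * (N / 2)! := by gcongr <;> omega
      _ ≤ (N / 2)! * (N / 2 + 1) ^ (N - N / 2) := by
          rw [pow_mul, mul_comm]
          gcongr
          omega
      _ ≤ (N / 2 + (N - N / 2))! := Nat.factorial_mul_pow_le_factorial
      _ = N ! := by rw [Nat.add_sub_cancel' (Nat.div_le_self _ _)]

lemma card_filter_image_permGraph_mul_pow_le {r : ℕ} (hr : 0 < r) (hrn : 2 * r ^ 4 + t ≤ n)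
    (F : Finset (Equiv.Perm (Fin n))) {X : Finset (Fin n × Fin n)} (hX : 2 * t < #X) :
    #{S ∈ F.image permGraph | X ⊆ S} * r ^ #X ≤ (n - t)! / r := by
  rw [Nat.le_div_iff_mul_le hr]
  rcases le_or_gt #X n with hXn | hXn
  · calc #{S ∈ F.image permGraph | X ⊆ S} * r ^ #X * r ≤ (n - #X)! * r ^ (2 * (#X - t)) := by
          rw [mul_assoc, ← pow_succ]
          gcongr
          · simpa using card_filter_image_permGraph_le F X
          · omega
      _ = (r ^ 2) ^ (#X - t) * (n - t - (#X - t))! := by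
          rw [pow_mul, mul_comm, Nat.sub_sub_sub_cancel_right (by omega)]
      _ ≤ (n - t)! :=
          pow_mul_factorial_sub_le_factorial (by omega) (by positivity)
            (by rw [← pow_mul]; exact Nat.le_sub_of_add_le hrn)
  · have hempty : {S ∈ F.image permGraph | X ⊆ S} = ∅ := by
      refine filter_eq_empty_iff.2 fun S hS hXS ↦ ?_
      obtain ⟨σ, -, rfl⟩ := mem_image.1 hS
      exact hXn.not_ge ((card_le_card hXS).trans_eq (by rw [card_permGraph, Fintype.card_fin]))
    simp [hempty]

theorem four_mul_card_le_of_not_isTrivial {r R : ℕ} (hR : R ≠ 0) (hRr : 32 * R ^ 2 < r)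
    (htr : 4 * t ≤ r) (hrn : 2 * r ^ 4 + t ≤ n) (hnR : n < 2 ^ R)
    (htn : 2 ^ (2 * t) * (2 * t) * 2 + t < n) (hD : (n - t)! ≤ 3 * numDerangements (n - t))
    (hF : IsTIntersecting t F) (hFt : ¬ IsTrivial t F) : 4 * #F ≤ 3 * (n - t)! := by
  have hr : 32 < r := by nlinarith [Nat.pos_of_ne_zero hR]
  obtain ⟨𝓡, h𝓡F, h𝓡, hcore⟩ :=
    exists_common_subset_or_card_sdiff_le (𝓕 := F.image permGraph) (q := 2 * t) (t := t) hR hRr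
      (by omega) (by simpa [card_permGraph] using fun _ _ ↦ hnR)
      (fun X hX ↦ card_filter_image_permGraph_mul_pow_le (by omega) hrn F hX)
      (fun Y hY ↦ by simpa [hY] using card_filter_image_permGraph_le F Y)
      (by simpa [IsTIntersecting, agreements_eq_card_inter] using hF)
  have h𝓡' : 12 * #𝓡 ≤ (n - t)! := calc
    12 * #𝓡 ≤ (n - t)! / r * r := by rw [mul_comm]; gcongr; omega
    _ ≤ (n - t)! := Nat.div_mul_le_self _ _
  have hcard : #F = #(F.image permGraph \ 𝓡) + #𝓡 := by
    rw [card_sdiff_add_card_eq_card h𝓡F, card_image_of_injective _ permGraph_injective]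
  suffices 3 * #(F.image permGraph \ 𝓡) ≤ 2 * (n - t)! by omega
  rcases hcore with ⟨Y, hY, hYS⟩ | hsmall
  · have hle : #(F.image permGraph \ 𝓡) ≤ #{π ∈ F | Y ⊆ permGraph π} := by
      refine (card_le_card fun S hS ↦ ?_).trans (card_image_le (f := permGraph))
      obtain ⟨π, hπ, rfl⟩ := mem_image.1 (mem_sdiff.1 hS).1
      exact mem_image_of_mem _ (mem_filter.2 ⟨hπ, hYS _ hS⟩)
    have := hle.trans (card_filter_subset_permGraph_le hF hFt hY)
    omega
  · have hfact : 2 ^ (2 * t) * (2 * t) * 2 * (n - (t + 1))! ≤ (n - t)! := by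
      rw [← Nat.mul_factorial_pred (by omega : n - t ≠ 0), Nat.sub_sub]
      gcongr
      omega
    linarith [hsmall.trans_eq (mul_assoc _ _ _).symm]

end NontrivialFamilies

section Counting

variable {n t : ℕ}

lemma agreements_comm (σ π : Equiv.Perm (Fin n)) : agreements σ π = agreements π σ := by
  rw [agreements_eq_card_inter, inter_comm, ← agreements_eq_card_inter]

lemma agreements_self (σ : Equiv.Perm (Fin n)) : agreements σ σ = n := by
  simp [agreements]

/-- The permutations agreeing with every member of `G` on at least `t` indices. A maximal
`t`-intersecting family is its own `crossIntersecting` family, and is generated in this way by a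
small subfamily. -/
def crossIntersecting (t : ℕ) (G : Finset (Equiv.Perm (Fin n))) : Finset (Equiv.Perm (Fin n)) :=
  {σ | ∀ g ∈ G, t ≤ agreements σ g}

lemma mem_crossIntersecting {G : Finset (Equiv.Perm (Fin n))} {σ : Equiv.Perm (Fin n)} :
    σ ∈ crossIntersecting t G ↔ ∀ g ∈ G, t ≤ agreements σ g :=
  mem_filter_univ σ

lemma exists_card_le_crossIntersecting_eq (t : ℕ) (G₀ : Finset (Equiv.Perm (Fin n))) :
    ∃ G, #G ≤ t * n.centralBinom ∧ crossIntersecting t G = crossIntersecting t G₀ := by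
  obtain ⟨G, hG, hmin⟩ := exists_min_image
    {G : Finset (Equiv.Perm (Fin n)) | crossIntersecting t G = crossIntersecting t G₀} card
    ⟨G₀, by simp⟩
  rw [mem_filter_univ] at hG
  have hwitness : ∀ g ∈ G, ∃ f ∈ crossIntersecting t (G.erase g), agreements f g < t := by
    intro g hg
    by_contra! h
    refine (card_erase_lt_of_mem hg).not_ge (hmin (G.erase g) ?_)
    rw [mem_filter_univ, ← hG]
    ext f
    rw [mem_crossIntersecting, mem_crossIntersecting]
    refine ⟨fun hf g' hg' ↦ ?_, fun hf g' hg' ↦ hf g' (mem_of_mem_erase hg')⟩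
    rcases eq_or_ne g' g with rfl | hne
    · exact h f (mem_crossIntersecting.2 hf)
    · exact hf g' (mem_erase.2 ⟨hne, hg'⟩)
  choose! f hf hfg using hwitness
  refine ⟨G, ?_, hG⟩
  rw [Nat.centralBinom, two_mul]
  refine card_le_mul_choose_of_card_inter (A := fun g ↦ permGraph (f g)) (B := permGraph)
    (by simp [card_permGraph]) (by simp [card_permGraph]) (fun g hg ↦ ?_) fun g hg g' hg' hne ↦ ?_
  · rw [← agreements_eq_card_inter]
    exact hfg g hg
  · rw [← agreements_eq_card_inter]
    exact mem_crossIntersecting.1 (hf g hg) g' (mem_erase.2 ⟨hne.symm, hg'⟩)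

lemma exists_crossIntersecting_eq_self (htn : t ≤ n) {F : Finset (Equiv.Perm (Fin n))}
    (hF : IsTIntersecting t F) :
    ∃ H, F ⊆ H ∧ IsTIntersecting t H ∧ crossIntersecting t H = H := by
  obtain ⟨H, hFH, hH⟩ := Set.Finite.exists_le_maximal
    (Set.toFinite {H : Finset (Equiv.Perm (Fin n)) | IsTIntersecting t H}) (a := F) hF
  refine ⟨H, hFH, hH.prop, Subset.antisymm (fun σ hσ ↦ ?_) fun σ hσ ↦
    mem_crossIntersecting.2 (hH.prop σ hσ)⟩
  rw [mem_crossIntersecting] at hσ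
  refine hH.le_of_ge (y := insert σ H) ?_ (subset_insert σ H) (mem_insert_self σ H)
  intro π hπ ρ hρ
  rcases mem_insert.1 hπ with rfl | hπH <;> rcases mem_insert.1 hρ with rfl | hρH
  · rwa [agreements_self]
  · exact hσ ρ hρH
  · rw [agreements_comm]
    exact hσ π hπH
  · exact hH.prop π hπH ρ hρH

lemma card_filter_card_le_le {α : Type*} [Fintype α] (g : ℕ) :
    #{G : Finset α | #G ≤ g} ≤ (Fintype.card α + 1) ^ g := by
  classical
  calc #{G : Finset α | #G ≤ g} ≤
        #(univ.image fun f : Fin g → Option α ↦ (univ.image f).eraseNone) := by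
        refine card_le_card fun G hG ↦ mem_image.2 ⟨fun i ↦ G.toList[i]?, mem_univ _, ?_⟩
        ext a
        have hlength : G.toList.length ≤ g := by
          rw [length_toList]
          exact (mem_filter_univ G).1 hG
        simp only [mem_eraseNone, mem_image, mem_univ, true_and, ← mem_toList (s := G),
          List.mem_iff_getElem?]
        refine ⟨fun ⟨i, hi⟩ ↦ ⟨i, hi⟩, fun ⟨i, hi⟩ ↦ ⟨⟨i, ?_⟩, hi⟩⟩
        exact (List.getElem?_eq_some_iff.1 hi).1.trans_le hlength
    _ ≤ (Fintype.card α + 1) ^ g := card_image_le.trans_eq (by simp)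

lemma card_nontrivial_le {m M : ℕ} (htn : t ≤ n)
    (hM : ∀ F : Finset (Equiv.Perm (Fin n)), IsTIntersecting t F → ¬ IsTrivial t F → #F ≤ M) :
    Nat.card {F : Finset (Equiv.Perm (Fin n)) // IsTIntersecting t F ∧ ¬ IsTrivial t F ∧ #F = m} ≤
      (n ! + 1) ^ (t * n.centralBinom) * M.choose m := by
  classical
  set 𝒢 : Finset (Finset (Equiv.Perm (Fin n))) := {G | #G ≤ t * n.centralBinom}
  have hcover : ∀ F : Finset (Equiv.Perm (Fin n)), IsTIntersecting t F ∧ ¬ IsTrivial t F ∧ #F = m →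
      F ∈ {G ∈ 𝒢 | #(crossIntersecting t G) ≤ M}.biUnion
        fun G ↦ (crossIntersecting t G).powersetCard m := by
    rintro F ⟨hF, hFt, hFm⟩
    obtain ⟨H, hFH, hH, hHself⟩ := exists_crossIntersecting_eq_self htn hF
    obtain ⟨G, hG, hGH⟩ := exists_card_le_crossIntersecting_eq t H
    rw [hHself] at hGH
    have hHt : ¬ IsTrivial t H := fun ⟨I, hI, x, hx⟩ ↦ hFt ⟨I, hI, x, fun σ hσ ↦ hx σ (hFH hσ)⟩
    refine mem_biUnion.2 ⟨G, mem_filter.2 ⟨(mem_filter_univ _).2 hG, ?_⟩,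
      mem_powersetCard.2 ⟨?_, hFm⟩⟩
    · exact hGH ▸ hM H hH hHt
    · exact hGH ▸ hFH
  rw [Nat.card_eq_fintype_card, Fintype.card_subtype]
  calc _ ≤ _ := card_le_card fun F hF ↦ hcover F (mem_filter.1 hF).2
    _ ≤ #{G ∈ 𝒢 | #(crossIntersecting t G) ≤ M} * M.choose m :=
        card_biUnion_le_card_mul _ _ _ fun G hG ↦ by
          rw [card_powersetCard]
          exact Nat.choose_le_choose m (mem_filter.1 hG).2
    _ ≤ (n ! + 1) ^ (t * n.centralBinom) * M.choose m := by
        gcongr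
        refine (card_filter_le _ _).trans ((card_filter_card_le_le _).trans_eq ?_)
        rw [Fintype.card_perm, Fintype.card_fin]

lemma choose_le_card_isTIntersecting (htn : t ≤ n) (m : ℕ) :
    (n - t)!.choose m ≤
      Nat.card {F : Finset (Equiv.Perm (Fin n)) // IsTIntersecting t F ∧ #F = m} := by
  classical
  obtain ⟨I, -, hI⟩ := exists_subset_card_eq (s := (univ : Finset (Fin n))) (by simpa using htn)
  obtain ⟨S, hS, hSI⟩ := exists_card_eq_forall_mem_apply_eq 1 I
  rw [hI, Fintype.card_fin] at hS
  rw [← hS, ← card_powersetCard, Nat.card_eq_fintype_card, Fintype.card_subtype]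
  refine card_le_card fun F hF ↦ ?_
  obtain ⟨hFS, hFm⟩ := mem_powersetCard.1 hF
  refine (mem_filter_univ _).2 ⟨fun σ hσ π hπ ↦ hI.ge.trans (card_le_card fun i hi ↦ ?_), hFm⟩
  exact (mem_filter_univ i).2 ((hSI σ (hFS hσ) i hi).trans (hSI π (hFS hπ) i hi).symm)

lemma pow_mul_choose_le_pow_mul_choose {a b M N : ℕ} (hba : b ≤ a) (h : a * M ≤ b * N) (m : ℕ) :
    a ^ m * M.choose m ≤ b ^ m * N.choose m := by
  have hdesc : a ^ m * M.descFactorial m ≤ b ^ m * N.descFactorial m := by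
    induction m with
    | zero => simp
    | succ m ih =>
      have hfactor : a * (M - m) ≤ b * (N - m) := by
        rw [Nat.mul_sub, Nat.mul_sub]
        exact tsub_le_tsub h (Nat.mul_le_mul_right m hba)
      calc a ^ (m + 1) * M.descFactorial (m + 1)
          = a * (M - m) * (a ^ m * M.descFactorial m) := by rw [Nat.descFactorial_succ]; ring
        _ ≤ b * (N - m) * (b ^ m * N.descFactorial m) := Nat.mul_le_mul hfactor ih
        _ = b ^ (m + 1) * N.descFactorial (m + 1) := by rw [Nat.descFactorial_succ]; ring
  rw [Nat.descFactorial_eq_factorial_mul_choose, Nat.descFactorial_eq_factorial_mul_choose,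
    mul_left_comm, mul_left_comm (b ^ m)] at hdesc
  exact Nat.le_of_mul_le_mul_left hdesc m.factorial_pos

lemma pow_mul_card_nontrivial_le (htn : t ≤ n) {a b : ℕ} (hba : b ≤ a) (ha : 0 < a)
    (h : ∀ F : Finset (Equiv.Perm (Fin n)), IsTIntersecting t F → ¬ IsTrivial t F →
      a * #F ≤ b * (n - t)!) (m : ℕ) :
    a ^ m * Nat.card {F : Finset (Equiv.Perm (Fin n)) //
        IsTIntersecting t F ∧ ¬ IsTrivial t F ∧ #F = m} ≤
      (n ! + 1) ^ (t * n.centralBinom) * b ^ m *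
        Nat.card {F : Finset (Equiv.Perm (Fin n)) // IsTIntersecting t F ∧ #F = m} := by
  have hM : ∀ F : Finset (Equiv.Perm (Fin n)), IsTIntersecting t F → ¬ IsTrivial t F →
      #F ≤ b * (n - t)! / a := fun F hF hFt ↦
    (Nat.le_div_iff_mul_le ha).2 ((mul_comm _ _).trans_le (h F hF hFt))
  calc _ ≤ a ^ m * ((n ! + 1) ^ (t * n.centralBinom) * (b * (n - t)! / a).choose m) := by
        gcongr
        exact card_nontrivial_le htn hM
    _ = (n ! + 1) ^ (t * n.centralBinom) * (a ^ m * (b * (n - t)! / a).choose m) :=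
        mul_left_comm ..
    _ ≤ (n ! + 1) ^ (t * n.centralBinom) * (b ^ m * (n - t)!.choose m) := by
        refine Nat.mul_le_mul_left _ ?_
        exact pow_mul_choose_le_pow_mul_choose hba (Nat.mul_div_le _ _) m
    _ ≤ _ := by
        rw [mul_assoc]
        gcongr
        exact choose_le_card_isTIntersecting htn m

end Counting

section Asymptotics

lemma sq_centralBinom_mul_le (n : ℕ) : n.centralBinom ^ 2 * (2 * n + 1) ≤ 16 ^ n := by
  induction n with
  | zero => simp
  | succ n ih =>
    refine Nat.le_of_mul_le_mul_left ?_ (by positivity : 0 < (n + 1) ^ 2)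
    calc (n + 1) ^ 2 * ((n + 1).centralBinom ^ 2 * (2 * (n + 1) + 1))
        = ((n + 1) * (n + 1).centralBinom) ^ 2 * (2 * n + 3) := by ring
      _ = 4 * ((2 * n + 1) * (2 * n + 3)) * (n.centralBinom ^ 2 * (2 * n + 1)) := by
          rw [Nat.succ_mul_centralBinom_succ]; ring
      _ ≤ 4 * (4 * (n + 1) ^ 2) * 16 ^ n :=
          Nat.mul_le_mul (Nat.mul_le_mul_left 4 (by linarith)) ih
      _ = (n + 1) ^ 2 * 16 ^ (n + 1) := by ring

lemma eventually_mul_centralBinom_le (c k : ℕ) :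
    ∀ᶠ n : ℕ in Filter.atTop, c * n.centralBinom ≤ 2 ^ (2 * n - k) := by
  filter_upwards [Filter.eventually_ge_atTop (k + c ^ 2 * 4 ^ k)] with n hn
  refine le_of_pow_le_pow_left₀ two_ne_zero (Nat.zero_le _) ?_
  refine Nat.le_of_mul_le_mul_right ?_ (by positivity : 0 < 4 ^ k * (2 * n + 1))
  calc (c * n.centralBinom) ^ 2 * (4 ^ k * (2 * n + 1))
      = (n.centralBinom ^ 2 * (2 * n + 1)) * (c ^ 2 * 4 ^ k) := by ring
    _ ≤ 16 ^ n * (2 * n + 1) := by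
        gcongr
        · exact sq_centralBinom_mul_le n
        · omega
    _ = (2 ^ (2 * n - k)) ^ 2 * (4 ^ k * (2 * n + 1)) := by
        have hpow : 16 ^ n = (2 ^ (2 * n - k)) ^ 2 * 4 ^ k := by
          rw [← pow_mul, show 4 = 2 ^ 2 by rfl, ← pow_mul, ← pow_add,
            show 16 = 2 ^ 4 by rfl, ← pow_mul]
          congr 1
          omega
        rw [hpow, mul_assoc]

lemma eventually_mul_succ_pow_le_two_pow (C d : ℕ) :
    ∀ᶠ k : ℕ in Filter.atTop, C * (k + 1) ^ d ≤ 2 ^ k := by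
  have hlim := ((tendsto_pow_const_div_const_pow_of_one_lt d (one_lt_two (α := ℝ))).comp
    (Filter.tendsto_add_atTop_nat 1)).const_mul (2 * C : ℝ)
  rw [mul_zero] at hlim
  filter_upwards [hlim.eventually (gt_mem_nhds one_pos)] with k hk
  have hpow : (0 : ℝ) < 2 ^ (k + 1) := by positivity
  rw [Function.comp_apply, ← mul_div_assoc, div_lt_one hpow, pow_succ (2 : ℝ)] at hk
  have : (C * (k + 1 : ℕ) ^ d : ℝ) ≤ 2 ^ k := by linarith
  exact_mod_cast this

lemma eventually_factorial_le_three_mul_numDerangements :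
    ∀ᶠ n : ℕ in Filter.atTop, n ! ≤ 3 * numDerangements n := by
  have hexp : (1 / 3 : ℝ) < Real.exp (-1) := by
    rw [Real.exp_neg, one_div]
    exact inv_strictAnti₀ (Real.exp_pos 1) (Real.exp_one_lt_d9.trans (by norm_num))
  filter_upwards [numDerangements_tendsto_inv_e.eventually (lt_mem_nhds hexp)] with n hn
  rw [div_lt_div_iff₀ three_pos (Nat.cast_pos.2 n.factorial_pos), one_mul, mul_comm] at hn
  exact_mod_cast hn.le

theorem eventually_four_mul_card_le (t : ℕ) :
    ∀ᶠ n : ℕ in Filter.atTop, ∀ F : Finset (Equiv.Perm (Fin n)),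
      IsTIntersecting t F → ¬ IsTrivial t F → 4 * #F ≤ 3 * (n - t)! := by
  have hlog : Filter.Tendsto (Nat.log 2) Filter.atTop Filter.atTop :=
    Filter.tendsto_atTop.2 fun k ↦ (Filter.eventually_ge_atTop (2 ^ k)).mono fun _ hn ↦
      Nat.le_log_of_pow_le one_lt_two hn
  filter_upwards [hlog.eventually (eventually_mul_succ_pow_le_two_pow (2 * (37 + 4 * t) ^ 4 + t) 8),
    (Filter.tendsto_sub_atTop_nat t).eventually eventually_factorial_le_three_mul_numDerangements,
    Filter.eventually_gt_atTop (2 ^ (2 * t) * (2 * t) * 2 + t)] with n hpow hD hn F hF hFt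
  set R := Nat.log 2 n + 1
  have hR : 1 ≤ R := by omega
  have hr : 32 * R ^ 2 + 4 * t + 1 ≤ (37 + 4 * t) * R ^ 2 := by nlinarith [Nat.one_le_pow 2 R hR]
  refine four_mul_card_le_of_not_isTrivial (r := 32 * R ^ 2 + 4 * t + 1) (R := R) (by omega)
    (by omega) (by omega) ?_ (Nat.lt_pow_succ_log_self one_lt_two n) hn hD hF hFt
  calc 2 * (32 * R ^ 2 + 4 * t + 1) ^ 4 + t ≤ 2 * ((37 + 4 * t) * R ^ 2) ^ 4 + t * R ^ 8 := by
        gcongr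
        exact Nat.le_mul_of_pos_right t (by positivity)
    _ = (2 * (37 + 4 * t) ^ 4 + t) * R ^ 8 := by ring
    _ ≤ 2 ^ Nat.log 2 n := hpow
    _ ≤ n := Nat.pow_log_le_self 2 (by omega)

lemma factorial_lt_self_pow {n : ℕ} (hn : 2 ≤ n) : n ! < n ^ n := by
  obtain ⟨k, rfl⟩ := Nat.exists_eq_add_of_le' hn
  calc (k + 2)! = (k + 2) * (k + 1)! := Nat.factorial_succ _
    _ ≤ (k + 2) * (k + 1) ^ (k + 1) := by gcongr; exact Nat.factorial_le_pow _
    _ < (k + 2) * (k + 2) ^ (k + 1) := by gcongr; omega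
    _ = (k + 2) ^ (k + 2) := (pow_succ' _ _).symm

lemma pow_le_six_fifths_pow {n g m : ℕ} (hn : 2 ≤ n) (hm : 5 * g * Real.logb 2 n ≤ m) :
    (n : ℝ) ^ g ≤ (6 / 5) ^ m := by
  have hn₀ : (0 : ℝ) < n := by positivity
  refine le_of_pow_le_pow_left₀ (n := 5) (by norm_num) (by positivity) ?_
  calc ((n : ℝ) ^ g) ^ 5 = ((2 : ℝ) ^ Real.logb 2 n) ^ (5 * g) := by
        rw [Real.rpow_logb two_pos (by norm_num) hn₀, ← pow_mul, mul_comm]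
    _ = (2 : ℝ) ^ (5 * g * Real.logb 2 n) := by
        rw [← Real.rpow_mul_natCast two_pos.le, mul_comm]; push_cast; rfl
    _ ≤ (2 : ℝ) ^ (m : ℝ) := Real.rpow_le_rpow_of_exponent_le one_le_two hm
    _ = 2 ^ m := Real.rpow_natCast _ _
    _ ≤ ((6 / 5 : ℝ) ^ 5) ^ m := by gcongr; norm_num
    _ = ((6 / 5 : ℝ) ^ m) ^ 5 := pow_right_comm ..

lemma eventually_mul_centralBinom_mul_logb_le (t : ℕ) :
    ∀ᶠ n : ℕ in Filter.atTop, 5 * t * n.centralBinom * n * Real.logb 2 n ≤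
      n * 2 ^ (2 * n - 2 * t + 2) * Real.logb 2 n := by
  filter_upwards [eventually_mul_centralBinom_le (5 * t) (2 * t), Filter.eventually_ge_atTop 1]
    with n hbinom hn
  have hlog : 0 ≤ Real.logb 2 n := Real.logb_nonneg one_lt_two (mod_cast hn)
  have hpow : (5 * t * n.centralBinom : ℝ) ≤ 2 ^ (2 * n - 2 * t + 2) := by
    exact_mod_cast hbinom.trans (Nat.pow_le_pow_right two_pos (Nat.le_add_right _ 2))
  rw [mul_comm (n : ℝ)]
  gcongr

lemma self_le_mul_two_pow_mul_logb {n : ℕ} (hn : 2 ≤ n) (k : ℕ) :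
    (n : ℝ) ≤ n * 2 ^ k * Real.logb 2 n := by
  have hlog : 1 ≤ Real.logb 2 n := by
    rw [Real.le_logb_iff_rpow_le one_lt_two (by positivity), Real.rpow_one]
    exact_mod_cast hn
  rw [mul_assoc]
  exact le_mul_of_one_le_right (Nat.cast_nonneg n)
    (one_le_mul_of_one_le_of_one_le (one_le_pow₀ one_le_two) hlog)

end Asymptotics

theorem typical_structure_of_t_intersecting_families_of_size_m_general (t : ℕ) :
    ∀ᶠ n : ℕ in Filter.atTop, ∀ m : ℕ, 5 * t * n.centralBinom * n * Real.logb 2 n ≤ m →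
      (Nat.card {F : Finset (Equiv.Perm (Fin n)) //
          IsTIntersecting t F ∧ ¬ IsTrivial t F ∧ F.card = m} : ℝ) ≤
        (9 / 10) ^ m * (Nat.card {F : Finset (Equiv.Perm (Fin n)) //
          IsTIntersecting t F ∧ F.card = m} : ℝ) := by
  filter_upwards [eventually_four_mul_card_le t, Filter.eventually_ge_atTop (t + 2)]
    with n hbound hn m hm
  have hcount := pow_mul_card_nontrivial_le (by omega) (by norm_num) four_pos hbound m
  have hgen : ((n ! + 1 : ℕ) : ℝ) ^ (t * n.centralBinom) ≤ (6 / 5) ^ m := calc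
    _ ≤ ((n : ℝ) ^ n) ^ (t * n.centralBinom) := by
        gcongr
        exact_mod_cast factorial_lt_self_pow (by omega)
    _ = (n : ℝ) ^ (n * (t * n.centralBinom)) := (pow_mul ..).symm
    _ ≤ (6 / 5) ^ m := pow_le_six_fifths_pow (by omega) (hm.trans' (by push_cast; ring_nf; rfl))
  generalize Nat.card {F : Finset (Equiv.Perm (Fin n)) //
    IsTIntersecting t F ∧ ¬ IsTrivial t F ∧ F.card = m} = nontrivial at hcount ⊢
  generalize Nat.card {F : Finset (Equiv.Perm (Fin n)) //
    IsTIntersecting t F ∧ F.card = m} = total at hcount ⊢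
  refine le_of_mul_le_mul_left ?_ (by positivity : (0 : ℝ) < 4 ^ m)
  calc (4 : ℝ) ^ m * nontrivial
      ≤ ((n ! + 1 : ℕ) : ℝ) ^ (t * n.centralBinom) * 3 ^ m * total := mod_cast hcount
    _ ≤ (6 / 5) ^ m * 3 ^ m * total := by gcongr
    _ = 4 ^ m * ((9 / 10) ^ m * total) := by
        rw [← mul_assoc, ← mul_pow, ← mul_pow]; norm_num

theorem typical_structure_of_t_intersecting_families_of_size_m
    (t : ℕ) (ht : 1 ≤ t) (ε : ℝ) (hε : 0 < ε) :
    ∃ n₀ : ℕ, ∀ n : ℕ, n₀ ≤ n → ∀ m : ℕ,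
      (n : ℝ) * (2 : ℝ) ^ (2 * n - 2 * t + 2) * Real.logb 2 n ≤ (m : ℝ) →
      m ≤ (n - t).factorial →
      (Nat.card {F : Finset (Equiv.Perm (Fin n)) //
          IsTIntersecting t F ∧ ¬ IsTrivial t F ∧ F.card = m} : ℝ) ≤
        ε * (Nat.card {F : Finset (Equiv.Perm (Fin n)) //
          IsTIntersecting t F ∧ F.card = m} : ℝ) := by
  have hdecay : ∀ᶠ n : ℕ in Filter.atTop, ((9 : ℝ) / 10) ^ n ≤ ε :=
    (tendsto_pow_atTop_nhds_zero_of_lt_one (by norm_num) (by norm_num)).eventually_le_const hε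
  refine Filter.eventually_atTop.1 ?_
  filter_upwards [typical_structure_of_t_intersecting_families_of_size_m_general t,
    eventually_mul_centralBinom_mul_logb_le t, hdecay, Filter.eventually_ge_atTop 2]
    with n hgeneral hbinom hdecay hn m hm _
  have hnm : n ≤ m := mod_cast (self_le_mul_two_pow_mul_logb hn _).trans hm
  have hpow : ((9 : ℝ) / 10) ^ m ≤ ε :=
    (pow_le_pow_of_le_one (by norm_num) (by norm_num) hnm).trans hdecay
  exact (hgeneral m (hbinom.trans hm)).trans (mul_le_mul_of_nonneg_right hpow (Nat.cast_nonneg _))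
end
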